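/- Let A be an equidimensional complete local ring containing a field, of dimension d ≥ 2, with separably closed residue field. If the Lyubeznik numbers λ_{j,j+1}(A) vanish for all 0 ≤ j ≤ i for some i ≤ d−2, then the connectedness dimension of A satisfies c(A) ≥ i + 1. -/

import Mathlib

open IsLocalRing PrimeSpectrum CategoryTheory

noncomputable section

universe u

/-- The connectedness dimension of `A`: the minimal dimension of a closed subset
`Z = V(J)` of `Spec A` such that `Spec A \ Z` is disconnected (the empty space
counting as disconnected). -/
noncomputable def connDim (A : Type*) [CommRing A] : WithBot ℕ∞ :=
  sInf {d | ∃ J : Ideal A, ringKrullDim (A ⧸ J) = d ∧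
    ¬ IsConnected ((PrimeSpectrum.zeroLocus (J : Set A))ᶜ)}

/-- The module `Ext^i_R(k, H^{n-j}_I(R))` whose dimension over the residue field
`k` of `R` is the Lyubeznik number `λ_{i,j}` of `R/I`. -/
noncomputable def lyubeznikModule (R : Type u) [CommRing R] [IsLocalRing R]
    (I : Ideal R) (n i j : ℕ) : ModuleCat.{u} R :=
  ((_root_.Ext R (ModuleCat.{u} R) i).obj
    (Opposite.op (ModuleCat.of R (ResidueField R)))).obj
    ((localCohomology I (n - j)).obj (ModuleCat.of R R))

/-- The Lyubeznik number `λ_{i,j}` of `R/I`, i.e. the dimension of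
`Ext^i_R(k, H^{n-j}_I(R))` as a vector space over the residue field `k`, encoded as
the Krull dimension of its lattice of `R`-submodules (which agrees with the length
of the module, hence with the `k`-dimension, since the module is annihilated by the
maximal ideal). -/
noncomputable def lyubeznikNumber (R : Type u) [CommRing R] [IsLocalRing R]
    (I : Ideal R) (n i j : ℕ) : WithBot ℕ∞ :=
  Order.krullDim (Submodule R (lyubeznikModule R I n i j))

/-- `A` contains a field. -/
def ContainsField (A : Type*) [CommRing A] : Prop := ∃ F : Subring A, IsField F

/-- `R` is a regular local ring: Noetherian, local, and the maximal ideal is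
generated by `dim R` elements. -/
def IsRegularLocal (R : Type*) [CommRing R] [IsLocalRing R] [IsNoetherianRing R] : Prop :=
  ∃ s : Finset R, Ideal.span (s : Set R) = maximalIdeal R ∧
    ringKrullDim R = (s.card : ℕ)

/-!
Present `A` as `R ⧸ I` with `n = dim R`. If removing a closed set of dimension at most `i`
disconnects `Spec A`, equidimensionality yields ideals `a, b ⊇ I` of `R` with `a ∩ b` equal to `I`
up to radical, `dim R/a, dim R/b ≥ i + 2` and `dim R/(a + b) ≤ i`.

Let `J` be an injective resolution of `R`. Then `Γ_I J = Γ_a J + Γ_b J` and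
`Γ_a J ∩ Γ_b J = Γ_{a+b} J`, and the latter is exact in degrees below `n - i`; so in low degrees
`RΓ_I R` is the direct sum of `RΓ_a R` and `RΓ_b R`. Take a nonzero socle class `z` of `H^n_m(R)`.
A maximal regular sequence in `a` generates an ideal `F` with `v a ⊆ F` for some `v ∉ F`, and `z` is
`v` times an element killed by `F + m^t`. As `Hom(R/F, J)` has no cohomology beyond the length of
the sequence, `z` lifts to the truncation of `RΓ_a R` in degrees `≤ n - i - 2`, and likewise for
`b`. The vanishing of `Ext^j(k, H^{n-1-j}_I(R))` for `j ≤ i` makes the two lifts agree in the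
truncation of `RΓ_I R`, hence both vanish by the direct sum decomposition, and `z` would be the
boundary of an `m`-power torsion element.
-/

namespace LyubeznikConnectedness

open RingTheory.Sequence Pointwise

lemma isLocalRing_quotient {R : Type*} [CommRing R] [IsLocalRing R] {I : Ideal R}
    (hI : I ≤ maximalIdeal R) : IsLocalRing (R ⧸ I) :=
  have : Nontrivial (R ⧸ I) :=
    Ideal.Quotient.nontrivial_iff.2 (ne_top_of_le_ne_top (maximalIdeal.isMaximal R).ne_top hI)
  .of_surjective' (Ideal.Quotient.mk I) Ideal.Quotient.mk_surjective

lemma ringKrullDim_quotient_le_of_le {R : Type*} [CommRing R] {I J : Ideal R} (h : I ≤ J) :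
    ringKrullDim (R ⧸ J) ≤ ringKrullDim (R ⧸ I) :=
  ringKrullDim_le_of_surjective (Ideal.Quotient.factor h) (Ideal.Quotient.factor_surjective h)

section RegularLocalRing

variable {R : Type*} [CommRing R] [IsLocalRing R] [IsNoetherianRing R]

lemma exists_span_insert_eq_maximalIdeal {x : R} (hx : x ∈ maximalIdeal R)
    (hx2 : x ∉ maximalIdeal R ^ 2) :
    ∃ s : Finset R, s.card + 1 ≤ (maximalIdeal R).spanFinrank ∧
      Ideal.span (insert x (s : Set R)) = maximalIdeal R := by
  classical
  obtain ⟨t, ht, htspan⟩ :=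
    Submodule.FG.exists_span_finset_card_eq_spanFinrank (maximalIdeal R).fg_of_isNoetherianRing
  have htm : ∀ z ∈ t, z ∈ maximalIdeal R := fun z hz => htspan ▸ Ideal.subset_span hz
  obtain ⟨c, hc⟩ := Submodule.mem_span_finset'.1
    (htspan.symm ▸ hx : x ∈ Submodule.span R (t : Set R))
  obtain ⟨y, hy⟩ : ∃ y : t, IsUnit (c y) := by
    by_contra! hcon
    refine hx2 (hc ▸ Ideal.sum_mem _ fun y _ => ?_)
    rw [pow_two]
    exact Ideal.mul_mem_mul ((mem_maximalIdeal _).2 (hcon y)) (htm y y.2)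
  set J := Ideal.span (insert x ((t.erase y : Finset R) : Set R))
  have herase : ∀ z ∈ t, z ≠ y → z ∈ J := fun z hz hzy => Ideal.subset_span (by simp [hz, hzy])
  have hyJ : (y : R) ∈ J := by
    have hcy : c y * y = x - ∑ z ∈ Finset.univ.erase y, c z * z := by
      rw [← hc, ← Finset.add_sum_erase _ _ (Finset.mem_univ y)]
      simp
    refine (Ideal.unit_mul_mem_iff_mem _ hy).1 (hcy ▸ sub_mem (Ideal.subset_span (by simp)) ?_)
    exact Ideal.sum_mem _ fun z hz => Ideal.mul_mem_left _ _
      (herase z z.2 fun h => (Finset.mem_erase.1 hz).1 (Subtype.ext h))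
  refine ⟨t.erase y, ?_, le_antisymm ?_ ?_⟩
  · rw [← ht, Finset.card_erase_add_one y.2]
  · rw [Ideal.span_le, Set.insert_subset_iff]
    exact ⟨hx, fun z hz => htm z (Finset.mem_of_mem_erase hz)⟩
  · rw [← htspan]
    refine Submodule.span_le.2 fun z hz => ?_
    obtain rfl | hzy := eq_or_ne z y
    · exact hyJ
    · exact herase z hz hzy

lemma isRegularLocalRing_quotient_span_singleton {x : R} (hR : IsRegularLocalRing R)
    (hx : x ∈ maximalIdeal R) (hx2 : x ∉ maximalIdeal R ^ 2) :
    IsRegularLocalRing (R ⧸ Ideal.span {x}) ∧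
      ringKrullDim (R ⧸ Ideal.span {x}) + 1 = ringKrullDim R := by
  classical
  have hxm : Ideal.span {x} ≤ maximalIdeal R := (Ideal.span_singleton_le_iff_mem _).2 hx
  have := isLocalRing_quotient hxm
  obtain ⟨s, hs, hspan⟩ := exists_span_insert_eq_maximalIdeal hx hx2
  have hmax : maximalIdeal (R ⧸ Ideal.span {x}) =
      Ideal.span (s.image (Ideal.Quotient.mk (Ideal.span {x})) : Finset _) := by
    rw [← map_maximalIdeal_of_surjective _ Ideal.Quotient.mk_surjective, ← hspan, Ideal.map_span,
      Set.image_insert_eq, Ideal.Quotient.eq_zero_iff_mem.2 (Ideal.mem_span_singleton_self x),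
      Ideal.span_insert_zero, Finset.coe_image]
  have hgen : (maximalIdeal (R ⧸ Ideal.span {x})).spanFinrank + 1 ≤
      (maximalIdeal R).spanFinrank := by
    refine le_trans (Nat.succ_le_succ ?_) hs
    rw [hmax]
    refine (Submodule.spanFinrank_span_le_ncard_of_finite (Finset.finite_toSet _)).trans ?_
    rw [Set.ncard_coe_finset]
    exact Finset.card_image_le
  have hdim : ringKrullDim R ≤ ringKrullDim (R ⧸ Ideal.span {x}) + 1 := by
    have := ringKrullDim_le_ringKrullDim_quotient_add_card (s := {x})
      (by simpa [ringJacobson_eq_maximalIdeal] using hx)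
    rwa [Finset.coe_singleton, Finset.card_singleton, Nat.cast_one] at this
  have hle : ((maximalIdeal (R ⧸ Ideal.span {x})).spanFinrank : WithBot ℕ∞) + 1 ≤
      ringKrullDim R := by
    rw [← hR.spanFinrank_maximalIdeal]
    exact_mod_cast hgen
  refine ⟨.of_spanFinrank_maximalIdeal_le _ ?_, le_antisymm (le_trans ?_ hle) hdim⟩
  · exact ENat.WithBot.add_le_add_one_right_iff.1 (hle.trans hdim)
  · gcongr
    exact ringKrullDim_le_spanFinrank_maximalIdeal _

lemma exists_mem_maximalIdeal_notMem_sq_notMem_minimalPrimes (h : 0 < ringKrullDim R) :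
    ∃ x ∈ maximalIdeal R, x ∉ maximalIdeal R ^ 2 ∧ ∀ Q ∈ minimalPrimes R, x ∉ Q := by
  have hmin : maximalIdeal R ∉ minimalPrimes R := by
    rw [← Ideal.height_eq_zero_iff]
    intro h0
    rw [← maximalIdeal_height_eq_ringKrullDim, h0] at h
    exact h.false
  have hsq : ¬ maximalIdeal R ≤ maximalIdeal R ^ 2 := by
    intro hle
    have hbot : maximalIdeal R = ⊥ := Submodule.eq_bot_of_le_smul_of_le_jacobson_bot
      (maximalIdeal R) _ (IsNoetherian.noetherian _) (hle.trans_eq (pow_two _))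
      (maximalIdeal_le_jacobson _)
    exact hmin ⟨⟨inferInstance, bot_le⟩, fun _ _ _ => hbot ▸ bot_le⟩
  by_contra! hcon
  obtain ⟨G, hG, hle⟩ := (Ideal.subset_union_prime_finite (f := id) (I := maximalIdeal R)
    ((minimalPrimes.finite_of_isNoetherianRing R).insert (maximalIdeal R ^ 2)) (maximalIdeal R ^ 2)
    (maximalIdeal R ^ 2) fun Q hQ hne _ => (hQ.resolve_left hne).1.1).1 fun y hy => by
      by_cases hy2 : y ∈ maximalIdeal R ^ 2
      · exact Set.mem_biUnion (Set.mem_insert _ _) hy2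
      · obtain ⟨Q, hQ, hyQ⟩ := hcon y hy hy2
        exact Set.mem_biUnion (Set.mem_insert_of_mem _ hQ) hyQ
  obtain rfl | hG := hG
  · exact hsq hle
  · have := hG.1.1
    exact hmin (le_antisymm (le_maximalIdeal this.ne_top) hle ▸ hG)

lemma eq_bot_of_mem_minimalPrimes_of_le_span_singleton {Q : Ideal R} {x : R}
    (hQ : Q ∈ minimalPrimes R) (hx : x ∈ maximalIdeal R) (hxQ : x ∉ Q)
    (hle : Q ≤ Ideal.span {x}) : Q = ⊥ := by
  have hQp : Q.IsPrime := hQ.1.1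
  refine Submodule.eq_bot_of_le_smul_of_le_jacobson_bot (maximalIdeal R) _
    (IsNoetherian.noetherian _) (fun z hz => ?_) (maximalIdeal_le_jacobson _)
  obtain ⟨c, rfl⟩ := Ideal.mem_span_singleton'.1 (hle hz)
  rw [mul_comm]
  exact Submodule.smul_mem_smul hx ((hQp.mem_or_mem hz).resolve_right hxQ)

end RegularLocalRing

lemma isDomain_of_isRegularLocalRing {R : Type*} [CommRing R] (hR : IsRegularLocalRing R) :
    IsDomain R := by
  obtain ⟨n, hn⟩ : ∃ n : ℕ, ringKrullDim R = n := ⟨_, hR.spanFinrank_maximalIdeal.symm⟩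
  induction n generalizing R with
  | zero =>
    have hm : (maximalIdeal R).spanFinrank = 0 := by
      exact_mod_cast hR.spanFinrank_maximalIdeal.trans hn
    rw [Submodule.spanFinrank_eq_zero_iff_eq_bot (maximalIdeal R).fg_of_isNoetherianRing] at hm
    exact (isField_iff_maximalIdeal_eq.2 hm).isDomain
  | succ n ih =>
    obtain ⟨x, hx, hx2, hxmin⟩ := exists_mem_maximalIdeal_notMem_sq_notMem_minimalPrimes (R := R)
      (by rw [hn]; exact_mod_cast n.succ_pos)
    obtain ⟨hreg, hdim⟩ := isRegularLocalRing_quotient_span_singleton hR hx hx2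
    rw [hn, Nat.cast_succ, ENat.WithBot.add_one_cancel] at hdim
    have := ih hreg hdim
    have : (Ideal.span {x}).IsPrime := (Ideal.Quotient.isDomain_iff_prime _).1 this
    obtain ⟨Q, hQ, hQx⟩ := Ideal.exists_minimalPrimes_le (bot_le : ⊥ ≤ Ideal.span {x})
    have : (⊥ : Ideal R).IsPrime :=
      eq_bot_of_mem_minimalPrimes_of_le_span_singleton hQ hx (hxmin Q hQ) hQx ▸ hQ.1.1
    exact IsDomain.of_bot_isPrime R

lemma mem_maximalIdeal_of_isRegular {R : Type*} [CommRing R] [IsLocalRing R] {rs : List R}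
    (h : IsRegular R rs) : ∀ r ∈ rs, r ∈ maximalIdeal R := by
  have hne : Ideal.ofList rs ≠ ⊤ := fun htop => h.top_ne_smul (by rw [htop, Submodule.top_smul])
  exact fun r hr => le_maximalIdeal hne (Ideal.subset_span hr)

lemma isWeaklyRegular_cons_of_quotient_span_singleton {R : Type*} [CommRing R] {x : R}
    {rs : List R} (hx : IsSMulRegular R x)
    (hrs : IsWeaklyRegular (R ⧸ Ideal.span {x}) (rs.map (Ideal.Quotient.mk (Ideal.span {x})))) :
    IsWeaklyRegular R (x :: rs) := by
  have hquot : (x • ⊤ : Submodule R R) = Ideal.span {x} := by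
    rw [← Submodule.ideal_span_singleton_smul, smul_eq_mul, Ideal.mul_top]
  exact .cons hx (((Submodule.quotEquivOfEq _ _ hquot).isWeaklyRegular_congr rs).2
    ((isWeaklyRegular_map_algebraMap_iff _ _ rs).1 hrs))

lemma exists_isRegular_ofList_eq_maximalIdeal {R : Type*} [CommRing R]
    (hR : IsRegularLocalRing R) :
    ∃ rs : List R, IsRegular R rs ∧ Ideal.ofList rs = maximalIdeal R := by
  obtain ⟨n, hn⟩ : ∃ n : ℕ, ringKrullDim R = n := ⟨_, hR.spanFinrank_maximalIdeal.symm⟩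
  induction n generalizing R with
  | zero =>
    have hm : (maximalIdeal R).spanFinrank = 0 := by
      exact_mod_cast hR.spanFinrank_maximalIdeal.trans hn
    rw [Submodule.spanFinrank_eq_zero_iff_eq_bot (maximalIdeal R).fg_of_isNoetherianRing] at hm
    exact ⟨[], .nil R R, by rw [hm, Ideal.ofList_nil]⟩
  | succ n ih =>
    obtain ⟨x, hx, hx2, -⟩ := exists_mem_maximalIdeal_notMem_sq_notMem_minimalPrimes (R := R)
      (by rw [hn]; exact_mod_cast n.succ_pos)
    obtain ⟨hreg, hdim⟩ := isRegularLocalRing_quotient_span_singleton hR hx hx2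
    rw [hn, Nat.cast_succ, ENat.WithBot.add_one_cancel] at hdim
    obtain ⟨rs, hrs, hspan⟩ := ih hreg hdim
    obtain ⟨rs, rfl⟩ := List.map_surjective_iff.2 Ideal.Quotient.mk_surjective rs
    have hcons : Ideal.ofList (x :: rs) = maximalIdeal R := by
      have : IsLocalHom (Ideal.Quotient.mk (Ideal.span {x})) :=
        .of_surjective _ Ideal.Quotient.mk_surjective
      rw [← maximalIdeal_comap (Ideal.Quotient.mk (Ideal.span {x})), ← hspan,
        ← Ideal.map_ofList, Ideal.comap_map_of_surjective _ Ideal.Quotient.mk_surjective,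
        ← RingHom.ker_eq_comap_bot, Ideal.mk_ker, Ideal.ofList_cons, sup_comm]
    have := isDomain_of_isRegularLocalRing hR
    have hx0 : IsSMulRegular R x := .of_ne_zero fun h => hx2 (h ▸ zero_mem _)
    exact ⟨x :: rs, .of_isWeaklyRegular_of_mem_maximalIdeal _
      (fun r hr => hcons ▸ Ideal.subset_span hr)
      (isWeaklyRegular_cons_of_quotient_span_singleton hx0 hrs.toIsWeaklyRegular), hcons⟩

lemma isRegular_append_singleton {R : Type*} [CommRing R] [IsLocalRing R] {rs : List R}
    {x : R} (hrs : IsRegular R rs) (hx : x ∈ maximalIdeal R)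
    (hreg : IsSMulRegular (R ⧸ Ideal.ofList rs) x) :
    IsRegular R (rs ++ [x]) := by
  have htop : (Ideal.ofList rs • ⊤ : Ideal R) = Ideal.ofList rs := Ideal.mul_top _
  refine .of_isWeaklyRegular_of_mem_maximalIdeal _ (fun r hr => ?_)
    ((isWeaklyRegular_append_iff _ _ _).2 ⟨hrs.toIsWeaklyRegular, ?_⟩)
  · obtain hr | hr := List.mem_append.1 hr
    · exact mem_maximalIdeal_of_isRegular hrs r hr
    · rwa [List.mem_singleton.1 hr]
  · rwa [isWeaklyRegular_singleton_iff, htop]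

section MaximalRegularSequence

variable {R : Type*} [CommRing R] [IsLocalRing R] [IsNoetherianRing R]

lemma length_le_of_isRegular {rs : List R} (h : IsRegular R rs) :
    (rs.length : WithBot ℕ∞) ≤ ringKrullDim R := by
  rw [← ringKrullDim_add_length_eq_ringKrullDim_of_isRegular rs h]
  have : Nontrivial (R ⧸ Ideal.ofList rs) := Ideal.Quotient.nontrivial_iff.2
    fun htop => h.top_ne_smul (by rw [htop, Submodule.top_smul])
  exact le_add_of_nonneg_left ringKrullDim_nonneg_of_nontrivial

lemma ringKrullDim_quotient_add_length_le {rs : List R} (h : IsRegular R rs) {a : Ideal R}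
    (ha : Ideal.ofList rs ≤ a) :
    ringKrullDim (R ⧸ a) + rs.length ≤ ringKrullDim R := by
  rw [← ringKrullDim_add_length_eq_ringKrullDim_of_isRegular rs h]
  gcongr
  exact ringKrullDim_quotient_le_of_le ha

lemma length_eq_ringKrullDim_of_ofList_eq_maximalIdeal {rs : List R} (h : IsRegular R rs)
    (hrs : Ideal.ofList rs = maximalIdeal R) : (rs.length : WithBot ℕ∞) = ringKrullDim R := by
  rw [← ringKrullDim_add_length_eq_ringKrullDim_of_isRegular rs h, hrs]
  have hfield : ringKrullDim (R ⧸ maximalIdeal R) = 0 :=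
    ringKrullDim_eq_zero_of_field (ResidueField R)
  rw [hfield, zero_add]

lemma exists_isRegular_le_and_not_isSMulRegular {a : Ideal R} (ha : a ≤ maximalIdeal R) :
    ∃ rs : List R, IsRegular R rs ∧ Ideal.ofList rs ≤ a ∧
      ∀ x ∈ a, ¬ IsSMulRegular (R ⧸ Ideal.ofList rs) x := by
  by_contra! hcon
  have hlong (g : ℕ) : ∃ rs : List R, IsRegular R rs ∧ Ideal.ofList rs ≤ a ∧ rs.length = g := by
    induction g with
    | zero => exact ⟨[], .nil R R, by simp, rfl⟩
    | succ g ih =>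
      obtain ⟨rs, hrs, hle, hlen⟩ := ih
      obtain ⟨x, hxa, hx⟩ := hcon rs hrs hle
      refine ⟨rs ++ [x], isRegular_append_singleton hrs (ha hxa) hx, ?_, by simp [hlen]⟩
      rw [Ideal.ofList_append, Ideal.ofList_singleton, sup_le_iff]
      exact ⟨hle, (Ideal.span_singleton_le_iff_mem _).2 hxa⟩
  obtain ⟨rs, hrs, -, hlen⟩ := hlong ((maximalIdeal R).spanFinrank + 1)
  have hle := (length_le_of_isRegular hrs).trans (ringKrullDim_le_spanFinrank_maximalIdeal R)
  rw [hlen, Nat.cast_le] at hle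
  exact Nat.not_succ_le_self _ hle

lemma exists_isRegular_and_notMem_and_mul_mem {a : Ideal R} (ha : a ≤ maximalIdeal R) :
    ∃ rs : List R, IsRegular R rs ∧ Ideal.ofList rs ≤ a ∧
      ∃ v ∉ Ideal.ofList rs, ∀ z ∈ a, v * z ∈ Ideal.ofList rs := by
  obtain ⟨rs, hrs, hle, hzd⟩ := exists_isRegular_le_and_not_isSMulRegular ha
  have hHom : ¬ Subsingleton ((R ⧸ a) →ₗ[R] (R ⧸ Ideal.ofList rs)) := by
    rw [IsSMulRegular.subsingleton_linearMap_iff, Ideal.annihilator_quotient]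
    rintro ⟨x, hx, hreg⟩
    exact hzd x hx hreg
  have := not_subsingleton_iff_nontrivial.1 hHom
  obtain ⟨φ, hφ⟩ := exists_ne (0 : (R ⧸ a) →ₗ[R] (R ⧸ Ideal.ofList rs))
  obtain ⟨v, hv⟩ := Submodule.Quotient.mk_surjective _ (φ (Submodule.Quotient.mk 1))
  refine ⟨rs, hrs, hle, v, fun hmem => hφ ?_, fun z hz => ?_⟩
  · ext
    exact hv.symm.trans ((Submodule.Quotient.mk_eq_zero _).2 hmem)
  · rw [mul_comm, ← smul_eq_mul, ← Submodule.Quotient.mk_eq_zero, Submodule.Quotient.mk_smul, hv,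
      ← map_smul, ← Submodule.Quotient.mk_smul, smul_eq_mul, mul_one,
      (Submodule.Quotient.mk_eq_zero _).2 hz, map_zero]

end MaximalRegularSequence

section Ext

open Abelian

/-- Vanishing of `Ext^q_R(M, N)`. -/
abbrev ExtVanishes (R : Type u) [CommRing R] (M N : Type u) [AddCommGroup M] [Module R M]
    [AddCommGroup N] [Module R N] (q : ℕ) : Prop :=
  Subsingleton (Ext (ModuleCat.of R M) (ModuleCat.of R N) q)

variable {R : Type u} [CommRing R] {M M' M'' N N' : Type u} [AddCommGroup M] [Module R M]
  [AddCommGroup M'] [Module R M'] [AddCommGroup M''] [Module R M''] [AddCommGroup N] [Module R N]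
  [AddCommGroup N'] [Module R N']

lemma ExtVanishes.of_equiv_left {q : ℕ} (h : ExtVanishes R M N q) (e : M' ≃ₗ[R] M) :
    ExtVanishes R M' N q :=
  have : Subsingleton (((extFunctor q).obj (.op (ModuleCat.of R M))).obj (ModuleCat.of R N)) := h
  (((extFunctor q).mapIso e.symm.toModuleIso.symm.op).app
    (ModuleCat.of R N)).addCommGroupIsoToAddEquiv.symm.toEquiv.subsingleton

lemma ExtVanishes.of_equiv_right {q : ℕ} (h : ExtVanishes R M N q) (e : N ≃ₗ[R] N') :
    ExtVanishes R M N' q :=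
  have : Subsingleton ((extFunctorObj (ModuleCat.of R M) q).obj (ModuleCat.of R N)) := h
  ((extFunctorObj (ModuleCat.of R M) q).mapIso
    e.symm.toModuleIso).addCommGroupIsoToAddEquiv.toEquiv.subsingleton

lemma ExtVanishes.of_exact {f : M' →ₗ[R] M} {g : M →ₗ[R] M''} (hf : Function.Injective f)
    (hg : Function.Surjective g) (hfg : Function.Exact f g) {q : ℕ} (h' : ExtVanishes R M' N q)
    (h'' : ExtVanishes R M'' N q) : ExtVanishes R M N q := by
  refine subsingleton_of_forall_eq 0 fun x => ?_
  obtain ⟨y, rfl⟩ := Ext.contravariant_sequence_exact₂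
    (ModuleCat.shortComplex_shortExact
      (ModuleCat.shortComplexOfCompEqZero f g hfg.linearMap_comp_eq_zero) hfg hf hg)
    (ModuleCat.of R N) x (h'.elim _ _)
  rw [h''.elim y 0, Ext.comp_zero]

lemma ExtVanishes.of_forall_isPrime [IsNoetherianRing R] [hM : Module.Finite R M] {c : Ideal R}
    (hc : c ≤ Module.annihilator R M) {q : ℕ}
    (h : ∀ p : Ideal R, p.IsPrime → c ≤ p → ExtVanishes R (R ⧸ p) N q) : ExtVanishes R M N q := by
  revert hc
  induction hM using IsNoetherianRing.induction_on_isQuotientEquivQuotientPrime R with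
  | subsingleton M =>
    intro _
    refine subsingleton_of_forall_eq 0 fun x => ?_
    have hid : 𝟙 (ModuleCat.of R M) = 0 := by
      ext z
      exact Subsingleton.elim (α := M) _ _
    rw [← Ext.mk₀_id_comp x, hid, Ext.mk₀_zero, Ext.zero_comp]
  | quotient M p e =>
    intro hc
    rw [e.annihilator_eq, Ideal.annihilator_quotient] at hc
    exact (h p.asIdeal p.2 hc).of_equiv_left e
  | exact M' M M'' f g hf hg hfg h' h'' =>
    intro hc
    exact .of_exact hf hg hfg (h' (hc.trans (LinearMap.annihilator_le_of_injective f hf)))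
      (h'' (hc.trans (LinearMap.annihilator_le_of_surjective g hg)))

lemma ringKrullDim_quotient_sup_span_singleton_succ_le {p : Ideal R} [p.IsPrime] {x : R}
    (hx : x ∉ p) : ringKrullDim (R ⧸ (p ⊔ Ideal.span {x})) + 1 ≤ ringKrullDim (R ⧸ p) := by
  have hx0 : Ideal.Quotient.mk p x ∈ nonZeroDivisors (R ⧸ p) :=
    mem_nonZeroDivisors_of_ne_zero fun h => hx (Ideal.Quotient.eq_zero_iff_mem.1 h)
  have hmap : Ideal.span {Ideal.Quotient.mk p x} = (Ideal.span {x}).map (Ideal.Quotient.mk p) := by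
    rw [Ideal.map_span, Set.image_singleton]
  have hle := ringKrullDim_quotient_succ_le_of_nonZeroDivisor hx0
  rwa [hmap, ringKrullDim_eq_of_ringEquiv (DoubleQuot.quotQuotEquivQuotSup p _)] at hle

section Local

variable [IsLocalRing R]

lemma support_residueField :
    Module.support R (ResidueField R) = PrimeSpectrum.zeroLocus (maximalIdeal R : Set R) := by
  rw [Module.support_eq_zeroLocus]
  exact congrArg (fun I : Ideal R => PrimeSpectrum.zeroLocus (I : Set R))
    Ideal.annihilator_quotient

lemma maximalIdeal_smul_top_lt_top : (maximalIdeal R • ⊤ : Submodule R R) < ⊤ := by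
  rw [smul_eq_mul, Ideal.mul_top]
  exact (maximalIdeal.isMaximal R).ne_top.lt_top

variable [IsNoetherianRing R]

lemma ExtVanishes.of_pow_maximalIdeal_le_annihilator [Module.Finite R M] {q t : ℕ}
    (hk : ExtVanishes R (ResidueField R) N q) (hM : maximalIdeal R ^ t ≤ Module.annihilator R M) :
    ExtVanishes R M N q :=
  .of_forall_isPrime hM fun p hp hle => by
    rwa [le_antisymm (le_maximalIdeal hp.ne_top) (hp.le_of_pow_le hle)]

lemma ExtVanishes.of_quotient_smul_top [Module.Finite R M] [Module.Finite R N] {x : R}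
    (hxm : x ∈ maximalIdeal R) (hx : IsSMulRegular M x) {q : ℕ}
    (h : ExtVanishes R (M ⧸ (x • ⊤ : Submodule R M)) N (q + 1)) : ExtVanishes R M N q := by
  have hsurj (y : Ext (ModuleCat.of R M) (ModuleCat.of R N) q) : ∃ y', x • y' = y := by
    obtain ⟨(y' : Ext (ModuleCat.of R M) _ q), hy'⟩ := Ext.contravariant_sequence_exact₁
      (IsSMulRegular.smulShortComplex_shortExact (M := ModuleCat.of R M) hx) (ModuleCat.of R N) y
      (add_comm 1 q) (h.elim _ _)
    have hsmul : (Ext.mk₀ (x • 𝟙 (ModuleCat.of R M))).comp y' (zero_add q) = x • y' := by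
      rw [Ext.mk₀_smul, Ext.smul_comp, Ext.mk₀_id_comp]
    exact ⟨y', hsmul.symm.trans hy'⟩
  have hbot : (⊤ : Submodule R (Ext (ModuleCat.of R M) (ModuleCat.of R N) q)) = ⊥ := by
    refine Submodule.eq_bot_of_le_smul_of_le_jacobson_bot (maximalIdeal R) _
      (IsNoetherian.noetherian _) (fun y _ => ?_) (maximalIdeal_le_jacobson _)
    obtain ⟨y', rfl⟩ := hsurj y
    exact Submodule.smul_mem_smul hxm trivial
  exact (Submodule.subsingleton_iff R).1 (subsingleton_of_top_le_bot hbot.le)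

lemma ExtVanishes.of_ringKrullDim_quotient_lt [Module.Finite R N] {n : ℕ}
    (hN : ∀ q < n, ExtVanishes R (ResidueField R) N q) {e : ℕ} {c : Ideal R}
    (hc : ringKrullDim (R ⧸ c) < e) [Module.Finite R M] (hM : c ≤ Module.annihilator R M)
    {q : ℕ} (hq : q + e ≤ n) : ExtVanishes R M N q := by
  induction e generalizing c M q with
  | zero =>
    refine .of_forall_isPrime hM fun p hp hcp => absurd ?_ hc.not_ge
    exact ringKrullDim_nonneg_of_nontrivial.trans (ringKrullDim_quotient_le_of_le hcp)
  | succ e ih =>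
    refine .of_forall_isPrime hM fun p hp hcp => ?_
    obtain hmp | hmp := em (maximalIdeal R ≤ p)
    · rw [le_antisymm (le_maximalIdeal hp.ne_top) hmp]
      exact hN q (by lia)
    · obtain ⟨x, hxm, hxp⟩ := Set.not_subset.1 hmp
      have hdim : ringKrullDim (R ⧸ (p ⊔ Ideal.span {x})) + 1 < e + 1 :=
        ((ringKrullDim_quotient_sup_span_singleton_succ_le hxp).trans
          (ringKrullDim_quotient_le_of_le hcp)).trans_lt (by exact_mod_cast hc)
      have hreg : IsSMulRegular (R ⧸ p) x := by
        rw [isSMulRegular_quotient_iff_mem_of_smul_mem]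
        exact fun r hr => (hp.mem_or_mem hr).resolve_left hxp
      refine .of_quotient_smul_top hxm hreg (ih (lt_of_add_lt_add_right hdim) ?_ (by lia))
      rw [sup_le_iff, Ideal.span_singleton_le_iff_mem]
      refine ⟨(Ideal.annihilator_quotient.ge).trans
        (LinearMap.annihilator_le_of_surjective _ (Submodule.mkQ_surjective _)), ?_⟩
      refine Module.mem_annihilator.2 fun z => ?_
      obtain ⟨z, rfl⟩ := Submodule.Quotient.mk_surjective _ z
      rw [← Submodule.Quotient.mk_smul, Submodule.Quotient.mk_eq_zero]
      exact Submodule.smul_mem_pointwise_smul _ _ _ trivial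

lemma extVanishes_residueField_of_lt_length {rs : List R} (h : IsRegular R rs) {q : ℕ}
    (hq : q < rs.length) : ExtVanishes R (ResidueField R) R q :=
  ModuleCat.subsingleton_ext_of_exists_isRegular (maximalIdeal R)
    (ModuleCat.of R (ResidueField R)) support_residueField.le (ModuleCat.of R R)
    maximalIdeal_smul_top_lt_top rs (mem_maximalIdeal_of_isRegular h) h q hq

lemma not_extVanishes_residueField_of_ringKrullDim_eq_length {rs : List R} (h : IsRegular R rs)
    (hrs : ringKrullDim R = rs.length) : ¬ ExtVanishes R (ResidueField R) R rs.length := by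
  intro hvan
  obtain ⟨rs', hlen, -, hrs'⟩ := ModuleCat.exists_isRegular_of_exists_subsingleton_ext
    (maximalIdeal R) (rs.length + 1) (ModuleCat.of R R) maximalIdeal_smul_top_lt_top
    (ModuleCat.of R (ResidueField R)) support_residueField fun q hq => by
      obtain hq | rfl := Nat.lt_succ_iff_lt_or_eq.1 hq
      exacts [extVanishes_residueField_of_lt_length h hq, hvan]
  have hle := length_le_of_isRegular hrs'
  rw [hrs, hlen, Nat.cast_le] at hle
  exact Nat.not_succ_le_self _ hle

lemma extVanishes_quotient_ofList_of_length_lt {rs : List R} (h : IsRegular R rs) {q : ℕ}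
    (hq : rs.length < q) : ExtVanishes R (R ⧸ Ideal.ofList rs) N q := by
  have hpd : projectiveDimension (ModuleCat.of R (R ⧸ Ideal.ofList rs)) = rs.length := by
    rw [← ModuleCat.projectiveDimension_quotient_eq_length.{u} rs h]
    exact projectiveDimension_eq_of_iso (Shrink.linearEquiv R _).symm.toModuleIso
  have : HasProjectiveDimensionLT (ModuleCat.of R (R ⧸ Ideal.ofList rs)) q :=
    (projectiveDimension_lt_iff.1 (hpd.trans_lt (by exact_mod_cast hq)))
  exact HasProjectiveDimensionLT.subsingleton _ q q le_rfl _

end Local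

end Ext

section Chase

variable {R : Type u} [CommRing R]

lemma exists_linearMap_lift_mem {Q A B : Type u} [AddCommGroup Q] [Module R Q]
    [Module.Projective R Q] [AddCommGroup A] [Module R A] [AddCommGroup B] [Module R B]
    {S : Submodule R A} {g : A →ₗ[R] B} {f : Q →ₗ[R] B} (hf : ∀ z, f z ∈ S.map g) :
    ∃ h : Q →ₗ[R] A, (∀ z, h z ∈ S) ∧ ∀ z, g (h z) = f z := by
  obtain ⟨h, hh⟩ := Module.projective_lifting_property (g.submoduleMap S)
    (f.codRestrict (S.map g) hf) (g.submoduleMap_surjective S)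
  exact ⟨S.subtype ∘ₗ h, fun z => (h z).2,
    fun z => congrArg Subtype.val (LinearMap.congr_fun hh z)⟩

variable {P : ℕ → Type u} [∀ p, AddCommGroup (P p)] [∀ p, Module R (P p)] {J : ℕ → Type u}
  [∀ q, AddCommGroup (J q)] [∀ q, Module R (J q)] (b : ∀ p, P (p + 1) →ₗ[R] P p)
  (d : ∀ q, J q →ₗ[R] J (q + 1))

/-- `IsZigzag b d φ p q u` says that `u : P p → J q` ends a zigzag
`φ, u₀ : P 0 → J m, …, u_p = u` in the double complex `Hom(P, J)`, each map being a preimage under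
`d` of the previous one composed with `b`. -/
inductive IsZigzag {m : ℕ} (φ : P 0 →ₗ[R] J (m + 1)) : ∀ p q, (P p →ₗ[R] J q) → Prop
  | zero (u : P 0 →ₗ[R] J m) : (∀ z, d m (u z) = φ z) → IsZigzag φ 0 m u
  | succ {p q : ℕ} (u : P p →ₗ[R] J (q + 1)) (v : P (p + 1) →ₗ[R] J q) :
      IsZigzag φ p (q + 1) u → (∀ z, d q (v z) = u (b p z)) → IsZigzag φ (p + 1) q v

/-- `HasLiftTower b d G K p q u` says that `u : P p → J q` can be continued by `K` further maps
`P (p + 1) → G (q - 1), …, P (p + K) → G (q - K)` of a zigzag with values in `G`. -/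
def HasLiftTower (G : ∀ q, Submodule R (J q)) : ∀ (_ p q : ℕ), (P p →ₗ[R] J q) → Prop
  | 0, _, _, _ => True
  | _ + 1, _, 0, _ => False
  | K + 1, p, q + 1, u => ∃ v : P (p + 1) →ₗ[R] J q, (∀ z, v z ∈ G q) ∧
      (∀ z, d q (v z) = u (b p z)) ∧ HasLiftTower G K (p + 1) q v

/-- Vanishing of `H^j(Hom(P, H^{r+1}(G)))` for a subcomplex `G` of `J`. Each `P j` being projective,
maps to `H^{r+1}(G)` are represented by maps to the cocycles of `G (r + 1)`. -/
def HomCohomologyVanishes (G : ∀ q, Submodule R (J q)) (r : ℕ) : ℕ → Prop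
  | 0 => ∀ w : P 0 →ₗ[R] J (r + 1), (∀ z, w z ∈ G (r + 1)) → (∀ z, d (r + 1) (w z) = 0) →
      (∀ z, w (b 0 z) ∈ (G r).map (d r)) → ∀ z, w z ∈ (G r).map (d r)
  | j + 1 => ∀ w : P (j + 1) →ₗ[R] J (r + 1), (∀ z, w z ∈ G (r + 1)) →
      (∀ z, d (r + 1) (w z) = 0) → (∀ z, w (b (j + 1) z) ∈ (G r).map (d r)) →
      ∃ w' : P j →ₗ[R] J (r + 1), (∀ z, w' z ∈ G (r + 1)) ∧ (∀ z, d (r + 1) (w' z) = 0) ∧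
        ∀ z, w z - w' (b j z) ∈ (G r).map (d r)

/-- Vanishing of `H^q(G)` for a subcomplex `G` of `J`. -/
def CohomologyVanishes (G : ∀ q, Submodule R (J q)) : ℕ → Prop
  | 0 => ∀ z ∈ G 0, d 0 z = 0 → z = 0
  | q + 1 => ∀ z ∈ G (q + 1), d (q + 1) z = 0 → z ∈ (G q).map (d q)

variable {b d}

lemma IsZigzag.congr {m : ℕ} {φ : P 0 →ₗ[R] J (m + 1)} {p q : ℕ} {u v : P p →ₗ[R] J q}
    (h : IsZigzag b d φ p q u) (huv : ∀ z, d q (v z) = d q (u z)) : IsZigzag b d φ p q v := by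
  cases h with
  | zero u hu => exact .zero _ fun z => (huv z).trans (hu z)
  | succ u u' hu hu' => exact .succ u _ hu fun z => (huv z).trans (hu' z)

lemma exists_linearMap_comp_eq_of_injective {A B I : Type u} [AddCommGroup A] [Module R A]
    [AddCommGroup B] [Module R B] [AddCommGroup I] [Module R I] (hI : Module.Injective R I)
    {f : A →ₗ[R] B} {g : A →ₗ[R] I} (hfg : LinearMap.ker f ≤ LinearMap.ker g) :
    ∃ y : B →ₗ[R] I, ∀ z, y (f z) = g z := by
  obtain ⟨y, hy⟩ := hI.out ((LinearMap.ker f).liftQ f le_rfl)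
    (LinearMap.ker_eq_bot.1 (Submodule.ker_liftQ_eq_bot _ _ _ le_rfl))
    ((LinearMap.ker f).liftQ g hfg)
  exact ⟨y, fun z => hy (Submodule.Quotient.mk z)⟩

lemma IsZigzag.exists_lift_comp_eq_zero (hJ : ∀ q, Module.Injective R (J q))
    (hb : ∀ p, Function.Exact (b (p + 1)) (b p)) (hd : ∀ q z, d (q + 1) (d q z) = 0)
    {m : ℕ} {φ : P 0 →ₗ[R] J (m + 1)} {p q : ℕ} {u : P p →ₗ[R] J q}
    (h : IsZigzag b d φ p q u) (hu : ∀ z, u (b p z) = 0) :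
    ∃ u₀ : P 0 →ₗ[R] J m, (∀ z, d m (u₀ z) = φ z) ∧ ∀ z, u₀ (b 0 z) = 0 := by
  induction p generalizing q with
  | zero =>
    cases h with
    | zero u h => exact ⟨u, h, hu⟩
  | succ p ih =>
    cases h with
    | succ v _ hv huv =>
      obtain ⟨y, hy⟩ := exists_linearMap_comp_eq_of_injective (hJ q) (f := b p) (g := u)
        fun z hz => by
          obtain ⟨x, rfl⟩ := (hb p z).1 hz
          exact hu x
      exact ih (u := v - d q ∘ₗ y) (hv.congr fun z => by simp [hd]) fun z => by simp [hy, huv]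

lemma HasLiftTower.congr {G : ∀ q, Submodule R (J q)} {K p q : ℕ} {u v : P p →ₗ[R] J q}
    (h : HasLiftTower b d G K p q u) (huv : ∀ z, v (b p z) = u (b p z)) :
    HasLiftTower b d G K p q v := by
  match K, q with
  | 0, _ => trivial
  | _ + 1, 0 => exact h.elim
  | _ + 1, _ + 1 =>
    obtain ⟨u', hu', hdu', htower⟩ := h
    exact ⟨u', hu', fun z => (hdu' z).trans (huv z).symm, htower⟩

lemma HasLiftTower.sub_comp (hb : ∀ p z, b p (b (p + 1) z) = 0) {G : ∀ q, Submodule R (J q)}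
    {K p q : ℕ} {u : P p →ₗ[R] J (q + 1)} (h : HasLiftTower b d G K p (q + 1) u)
    {v : P p →ₗ[R] J q} (hv : ∀ z, v z ∈ G q) :
    HasLiftTower b d G K p (q + 1) (u - d q ∘ₗ v) := by
  cases K with
  | zero => trivial
  | succ K =>
    obtain ⟨u', hu', hdu', htower⟩ := h
    exact ⟨u' - v ∘ₗ b p, fun z => sub_mem (hu' z) (hv _), fun z => by simp [hdu'],
      htower.congr fun z => by simp [hb]⟩

lemma HasLiftTower.smul {G G' : ∀ q, Submodule R (J q)} {v : R}
    (hv : ∀ q, ∀ z ∈ G q, v • z ∈ G' q) {K p q : ℕ} {u : P p →ₗ[R] J q}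
    (hu : HasLiftTower b d G K p q u) : HasLiftTower b d G' K p q (v • u) := by
  induction K generalizing p q with
  | zero => trivial
  | succ K ih =>
    cases q with
    | zero => exact hu.elim
    | succ q =>
      obtain ⟨u', hu'G, hu', htower⟩ := hu
      exact ⟨v • u', fun z => hv _ _ (hu'G z), fun z => by simp [hu'], ih htower⟩

lemma HasLiftTower.of_cohomologyVanishes [∀ p, Module.Projective R (P p)]
    (hbb : ∀ p z, b p (b (p + 1) z) = 0) {G : ∀ q, Submodule R (J q)} {g : ℕ}
    (hG : ∀ q, g < q → CohomologyVanishes d G q) {K p q : ℕ} (hq : g + K ≤ q)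
    {u : P p →ₗ[R] J q} (huG : ∀ z, u z ∈ G q) (hud : ∀ z, d q (u (b p z)) = 0) :
    HasLiftTower b d G K p q u := by
  induction K generalizing p q with
  | zero => trivial
  | succ K ih =>
    cases q with
    | zero => omega
    | succ q =>
      obtain ⟨u', hu'G, hu'⟩ := exists_linearMap_lift_mem (f := u ∘ₗ b p) fun z =>
        hG (q + 1) (by omega) _ (huG _) (hud z)
      exact ⟨u', hu'G, hu', ih (by omega) hu'G fun z => by
        rw [hu', LinearMap.comp_apply, hbb, map_zero]⟩

section Subcomplexes

variable {Ga Gb : ∀ q, Submodule R (J q)}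

lemma exists_linearMap_sub_eq_of_mem_sup {p q : ℕ} [Module.Projective R (P p)]
    {v : P p →ₗ[R] J q} (hv : ∀ z, v z ∈ Ga q ⊔ Gb q) :
    ∃ x y : P p →ₗ[R] J q, (∀ z, x z ∈ Ga q) ∧ (∀ z, y z ∈ Gb q) ∧ ∀ z, v z = x z - y z := by
  obtain ⟨h, hmem, hh⟩ := exists_linearMap_lift_mem (S := (Ga q).prod (Gb q))
    (g := LinearMap.fst R (J q) (J q) - LinearMap.snd R (J q) (J q)) (f := v) fun z => by
      obtain ⟨x, hx, y, hy, hxy⟩ := Submodule.mem_sup.1 (hv z)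
      exact ⟨(x, -y), ⟨hx, neg_mem hy⟩, by simpa using hxy⟩
  exact ⟨.fst R _ _ ∘ₗ h, .snd R _ _ ∘ₗ h, fun z => (hmem z).1, fun z => (hmem z).2,
    fun z => (hh z).symm⟩

lemma HasLiftTower.sub_mem_map_sup {K p r : ℕ} {h k : P p →ₗ[R] J (r + 1)}
    (hh : HasLiftTower b d Ga (K + 1) p (r + 1) h) (hk : HasLiftTower b d Gb (K + 1) p (r + 1) k)
    (z : P (p + 1)) : (h - k) (b p z) ∈ (Ga r ⊔ Gb r).map (d r) := by
  obtain ⟨h', hh', hdh', -⟩ := hh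
  obtain ⟨k', hk', hdk', -⟩ := hk
  exact ⟨h' z - k' z, sub_mem (Submodule.mem_sup_left (hh' z)) (Submodule.mem_sup_right (hk' z)),
    by simp [hdh', hdk']⟩

variable [∀ p, Module.Projective R (P p)] (hbb : ∀ p z, b p (b (p + 1) z) = 0)
  (hd : ∀ q z, d (q + 1) (d q z) = 0) (hGa : ∀ q, ∀ z ∈ Ga q, d q z ∈ Ga (q + 1))
  (hGb : ∀ q, ∀ z ∈ Gb q, d q z ∈ Gb (q + 1))

include hbb hd hGa hGb in
lemma HasLiftTower.exists_common {K p r : ℕ} {h k : P p →ₗ[R] J (r + 1)}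
    (hh : ∀ z, h z ∈ Ga (r + 1)) (hk : ∀ z, k z ∈ Gb (r + 1))
    (hha : HasLiftTower b d Ga K p (r + 1) h) (hkb : HasLiftTower b d Gb K p (r + 1) k)
    (hhk : ∀ z, h z - k z ∈ (Ga r ⊔ Gb r).map (d r)) :
    ∃ u : P p →ₗ[R] J (r + 1), (∀ z, u z ∈ Ga (r + 1) ⊓ Gb (r + 1)) ∧
      (∀ z, d (r + 1) (u z) = d (r + 1) (h z)) ∧ HasLiftTower b d Ga K p (r + 1) u ∧
      HasLiftTower b d Gb K p (r + 1) u := by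
  obtain ⟨v, hv, hdv⟩ := exists_linearMap_lift_mem (f := h - k) hhk
  obtain ⟨x, y, hx, hy, hxy⟩ := exists_linearMap_sub_eq_of_mem_sup hv
  have heq : h - d r ∘ₗ x = k - d r ∘ₗ y := by
    ext z
    have hz := hdv z
    rw [hxy, map_sub, LinearMap.sub_apply] at hz
    simp only [LinearMap.sub_apply, LinearMap.comp_apply]
    rw [sub_eq_sub_iff_sub_eq_sub, hz]
  refine ⟨h - d r ∘ₗ x, fun z => ⟨sub_mem (hh z) (hGa _ _ (hx z)), ?_⟩, fun z => by simp [hd],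
    hha.sub_comp hbb hx, heq ▸ hkb.sub_comp hbb hy⟩
  rw [heq]
  exact sub_mem (hk z) (hGb _ _ (hy z))

/-- A zigzag from `φ` ending at position `(p, q)` in the intersection of `Ga` and `Gb`, which can be
continued by `K` steps inside `Ga` as well as inside `Gb`. -/
def HasCommonLift (b : ∀ p, P (p + 1) →ₗ[R] P p) (d : ∀ q, J q →ₗ[R] J (q + 1))
    (Ga Gb : ∀ q, Submodule R (J q)) {m : ℕ} (φ : P 0 →ₗ[R] J (m + 1)) (K p q : ℕ) : Prop :=
  ∃ u : P p →ₗ[R] J q, (∀ z, u z ∈ Ga q ⊓ Gb q) ∧ IsZigzag b d φ p q u ∧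
    HasLiftTower b d Ga K p q u ∧ HasLiftTower b d Gb K p q u

include hbb hd hGa hGb in
lemma hasCommonLift_zero {K r : ℕ} {φ : P 0 →ₗ[R] J (r + 1 + 1)} {h k : P 0 →ₗ[R] J (r + 1)}
    (hh : ∀ z, h z ∈ Ga (r + 1)) (hk : ∀ z, k z ∈ Gb (r + 1)) (hφh : ∀ z, d (r + 1) (h z) = φ z)
    (hφk : ∀ z, d (r + 1) (k z) = φ z) (hha : HasLiftTower b d Ga (K + 1) 0 (r + 1) h)
    (hkb : HasLiftTower b d Gb (K + 1) 0 (r + 1) k)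
    (hvan : HomCohomologyVanishes b d (Ga ⊔ Gb) r 0) :
    HasCommonLift b d Ga Gb φ (K + 1) 0 (r + 1) := by
  have hhk := hvan (h - k)
    (fun z => sub_mem (Submodule.mem_sup_left (hh z)) (Submodule.mem_sup_right (hk z)))
    (fun z => by simp [hφh, hφk]) (hha.sub_mem_map_sup hkb)
  obtain ⟨u, hu, hdu, hua, hub⟩ := HasLiftTower.exists_common hbb hd hGa hGb hh hk hha hkb hhk
  exact ⟨u, hu, .zero _ fun z => (hdu z).trans (hφh z), hua, hub⟩

include hbb hd hGa hGb in
lemma HasCommonLift.succ {K p r m : ℕ} {φ : P 0 →ₗ[R] J (m + 1)}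
    (h : HasCommonLift b d Ga Gb φ (K + 1 + 1) p (r + 1 + 1))
    (hvan : HomCohomologyVanishes b d (Ga ⊔ Gb) r (p + 1)) :
    HasCommonLift b d Ga Gb φ (K + 1) (p + 1) (r + 1) := by
  obtain ⟨u, -, hzigzag, ⟨h, hh, hdh, hha⟩, ⟨k, hk, hdk, hkb⟩⟩ := h
  obtain ⟨w, hw, -, hhkw⟩ := hvan (h - k)
    (fun z => sub_mem (Submodule.mem_sup_left (hh z)) (Submodule.mem_sup_right (hk z)))
    (fun z => by simp [hdh, hdk]) (hha.sub_mem_map_sup hkb)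
  obtain ⟨e, f, he, hf, hef⟩ := exists_linearMap_sub_eq_of_mem_sup hw
  obtain ⟨v, hv, hdv, hva, hvb⟩ := HasLiftTower.exists_common hbb hd hGa hGb
    (h := h - e ∘ₗ b p) (k := k - f ∘ₗ b p) (fun z => sub_mem (hh z) (he _))
    (fun z => sub_mem (hk z) (hf _)) (hha.congr fun z => by simp [hbb])
    (hkb.congr fun z => by simp [hbb]) fun z => by
      have hz := hhkw z
      rwa [hef, LinearMap.sub_apply, sub_sub_sub_comm] at hz
  exact ⟨v, hv, .succ (u - d (r + 1) ∘ₗ e) _ (hzigzag.congr fun z => by simp [hd])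
    fun z => by simp [hdv, hdh], hva, hvb⟩

include hbb hd hGa hGb in
lemma HasCommonLift.of_homCohomologyVanishes {m i : ℕ} {φ : P 0 →ₗ[R] J (m + 1)}
    (h : HasCommonLift b d Ga Gb φ (i + 1) 0 m)
    (hvan : ∀ j r, 0 < j → j ≤ i → j + r + 1 = m → HomCohomologyVanishes b d (Ga ⊔ Gb) r j)
    {p q K : ℕ} (hpq : p + q = m) (hpK : p + K = i) (hq : 0 < q) :
    HasCommonLift b d Ga Gb φ (K + 1) p q := by
  induction p generalizing q K with
  | zero => rwa [show q = m by lia, show K = i by lia]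
  | succ p ih =>
    obtain ⟨r, rfl⟩ := Nat.exists_eq_succ_of_ne_zero hq.ne'
    exact (ih (q := r + 1 + 1) (K := K + 1) (by lia) (by lia) (by lia)).succ hbb hd hGa hGb
      (hvan _ _ (by lia) (by lia) (by lia))

include hbb in
lemma IsZigzag.exists_continuation {m i : ℕ} {φ : P 0 →ₗ[R] J (m + 1)} {q₀ : ℕ}
    (hq₀ : i + q₀ = m) {u : P i →ₗ[R] J q₀} (hzigzag : IsZigzag b d φ i q₀ u)
    (hu : ∀ z, u z ∈ Ga q₀ ⊓ Gb q₀) (hdu : ∀ z, d q₀ (u (b i z)) = 0)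
    (hvan : ∀ q, q + i ≤ m → CohomologyVanishes d (Ga ⊓ Gb) q) {p q : ℕ} (hpq : p + q = m)
    (hip : i ≤ p) :
    ∃ u : P p →ₗ[R] J q, (∀ z, u z ∈ Ga q ⊓ Gb q) ∧ IsZigzag b d φ p q u ∧
      ∀ z, d q (u (b p z)) = 0 := by
  induction p, hip using Nat.le_induction generalizing q with
  | base =>
    obtain rfl : q = q₀ := by lia
    exact ⟨u, hu, hzigzag, hdu⟩
  | succ p hp ih =>
    obtain ⟨v, hv, hzigzag, hdv⟩ := ih (q := q + 1) (by lia)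
    obtain ⟨v', hv', hdv'⟩ := exists_linearMap_lift_mem (f := v ∘ₗ b p)
      fun z => hvan (q + 1) (by lia) _ (hv _) (hdv z)
    exact ⟨v', hv', .succ v v' hzigzag hdv', fun z => by simp [hdv', hbb]⟩

include hd hGa hGb in
/-- The vanishing for `Ga ⊔ Gb` merges the two lifts into one zigzag in `Ga ⊓ Gb`, which the
vanishing for `Ga ⊓ Gb` then continues down to `J 0`. -/
theorem exists_lift_comp_eq_zero (hJ : ∀ q, Module.Injective R (J q))
    (hb : ∀ p, Function.Exact (b (p + 1)) (b p)) {m i : ℕ} (him : i + 1 ≤ m)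
    {φ : P 0 →ₗ[R] J (m + 1)} {h k : P 0 →ₗ[R] J m}
    (hh : ∀ z, h z ∈ Ga m) (hk : ∀ z, k z ∈ Gb m) (hφh : ∀ z, d m (h z) = φ z)
    (hφk : ∀ z, d m (k z) = φ z) (hha : HasLiftTower b d Ga (i + 1) 0 m h)
    (hkb : HasLiftTower b d Gb (i + 1) 0 m k)
    (hsup : ∀ j r, j ≤ i → j + r + 1 = m → HomCohomologyVanishes b d (Ga ⊔ Gb) r j)
    (hinf : ∀ q, q + i ≤ m → CohomologyVanishes d (Ga ⊓ Gb) q) :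
    ∃ u₀ : P 0 →ₗ[R] J m, (∀ z, d m (u₀ z) = φ z) ∧ ∀ z, u₀ (b 0 z) = 0 := by
  have hbb : ∀ p z, b p (b (p + 1) z) = 0 := fun p => (hb p).apply_apply_eq_zero
  obtain ⟨r, rfl⟩ := Nat.exists_eq_succ_of_ne_zero (by lia : m ≠ 0)
  have hzero := hasCommonLift_zero hbb hd hGa hGb hh hk hφh hφk hha hkb
    (hsup 0 r (by lia) (by lia))
  obtain ⟨s, hs⟩ : ∃ s, i + (s + 1) = r + 1 := ⟨r - i, by lia⟩
  obtain ⟨u, hu, hzigzag, ⟨u', -, hdu', -⟩, -⟩ := hzero.of_homCohomologyVanishes hbb hd hGa hGb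
    (fun j r _ => hsup j r) hs (add_zero i) s.succ_pos
  obtain ⟨v, hv, hvzigzag, hdv⟩ := hzigzag.exists_continuation hbb hs hu
    (fun z => by rw [← hdu', hd]) hinf (add_zero (r + 1)) (by lia)
  exact hvzigzag.exists_lift_comp_eq_zero hJ hb hd
    fun z => hinf 0 (by lia) _ (hv _) (hdv z)

end Subcomplexes

end Chase

section Resolutions

open Abelian

variable {R : Type u} [CommRing R] {M M'' N : Type u} [AddCommGroup M] [Module R M]
  [AddCommGroup M''] [Module R M''] [AddCommGroup N] [Module R N]

/-- The terms of an injective resolution of `N`, as types. -/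
abbrev injTerm (J : InjectiveResolution (ModuleCat.of R N)) (q : ℕ) : Type u := J.cocomplex.X q

/-- The differentials of an injective resolution of `N`, as linear maps. -/
abbrev injDiff (J : InjectiveResolution (ModuleCat.of R N)) (q : ℕ) :
    injTerm J q →ₗ[R] injTerm J (q + 1) :=
  (J.cocomplex.d q (q + 1)).hom

/-- The augmentation `N → J 0` of an injective resolution of `N`, as a linear map. -/
def injAug (J : InjectiveResolution (ModuleCat.of R N)) : N →ₗ[R] injTerm J 0 :=
  ((HomologicalComplex.singleObjXSelf (ComplexShape.up ℕ) 0 (ModuleCat.of R N)).inv ≫ J.ι.f 0).hom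

/-- The terms of a projective resolution of `N`, as types. -/
abbrev projTerm (P : ProjectiveResolution (ModuleCat.of R N)) (p : ℕ) : Type u := P.complex.X p

/-- The differentials of a projective resolution of `N`, as linear maps. -/
abbrev projDiff (P : ProjectiveResolution (ModuleCat.of R N)) (p : ℕ) :
    projTerm P (p + 1) →ₗ[R] projTerm P p :=
  (P.complex.d (p + 1) p).hom

/-- The augmentation `P 0 → N` of a projective resolution of `N`, as a linear map. -/
def projAug (P : ProjectiveResolution (ModuleCat.of R N)) : projTerm P 0 →ₗ[R] N :=
  (P.π.f 0 ≫ (HomologicalComplex.singleObjXSelf (ComplexShape.down ℕ) 0 (ModuleCat.of R N)).hom).hom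

section Projective

variable (P : ProjectiveResolution (ModuleCat.of R N))

instance projective_projTerm (p : ℕ) : Module.Projective R (projTerm P p) :=
  (IsProjective.iff_projective (P.complex.X p)).mpr (P.projective p)

lemma projDiff_exact (p : ℕ) : Function.Exact (projDiff P (p + 1)) (projDiff P p) :=
  (ShortComplex.ShortExact.moduleCat_exact_iff_function_exact _).mp (P.exact_succ p)

lemma projAug_surjective : Function.Surjective (projAug P) :=
  (ModuleCat.epi_iff_surjective (P.π.f 0 ≫
    (HomologicalComplex.singleObjXSelf (ComplexShape.down ℕ) 0 (ModuleCat.of R N)).hom)).mp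
    inferInstance

lemma projDiff_projAug_exact : Function.Exact (projDiff P 0) (projAug P) := by
  have h : Function.Exact (projDiff P 0) (P.π.f 0).hom :=
    (ShortComplex.ShortExact.moduleCat_exact_iff_function_exact _).mp P.exact₀
  let e := HomologicalComplex.singleObjXSelf (ComplexShape.down ℕ) 0 (ModuleCat.of R N)
  exact h.comp_injective e.hom.hom ((ModuleCat.mono_iff_injective e.hom).mp inferInstance)
    (map_zero e.hom.hom)

end Projective

section Injective

variable (J : InjectiveResolution (ModuleCat.of R N))

lemma injective_injTerm (q : ℕ) : Module.Injective R (injTerm J q) :=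
  (Module.injective_iff_injective_object R (J.cocomplex.X q)).mpr (J.injective q)

lemma injDiff_injDiff (q : ℕ) (z : injTerm J q) : injDiff J (q + 1) (injDiff J q z) = 0 :=
  congr($(J.cocomplex.d_comp_d q (q + 1) (q + 2)) z)

lemma injAug_injective : Function.Injective (injAug J) :=
  (ModuleCat.mono_iff_injective
    ((HomologicalComplex.singleObjXSelf (ComplexShape.up ℕ) 0 (ModuleCat.of R N)).inv ≫
      J.ι.f 0)).mp inferInstance

lemma ker_injDiff_zero_le_range_injAug :
    LinearMap.ker (injDiff J 0) ≤ LinearMap.range (injAug J) := by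
  intro z hz
  obtain ⟨y, hy⟩ := (ShortComplex.moduleCat_exact_iff _).mp J.exact₀ z hz
  have h := Iso.hom_inv_id_assoc
    (HomologicalComplex.singleObjXSelf (ComplexShape.up ℕ) 0 (ModuleCat.of R N)) (J.ι.f 0)
  exact ⟨_, (congr($h y)).trans hy⟩

end Injective

namespace ExtVanishes

lemma linearMap_eq_zero (h : ExtVanishes R M N 0) (f : M →ₗ[R] N) : f = 0 := by
  have hf : Ext.mk₀ (ModuleCat.ofHom f) = Ext.mk₀ 0 := h.elim _ _
  exact congr($(Ext.homEquiv₀.symm.injective hf).hom)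

section Injective

variable {J : InjectiveResolution (ModuleCat.of R N)} {q : ℕ}

lemma exists_injDiff_comp_eq (h : ExtVanishes R M N (q + 1)) {f : M →ₗ[R] injTerm J (q + 1)}
    (hf : ∀ z, injDiff J (q + 1) (f z) = 0) :
    ∃ y : M →ₗ[R] injTerm J q, ∀ z, injDiff J q (y z) = f z := by
  have hf' : ModuleCat.ofHom f ≫ J.cocomplex.d (q + 1) (q + 2) = 0 := by
    ext z; exact hf z
  obtain ⟨g, hg⟩ := (J.extMk_eq_zero_iff _ _ rfl hf' q rfl).mp (h.elim _ _)
  exact ⟨g.hom, fun z => congr($hg z)⟩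

lemma of_forall_exists_injDiff_comp_eq (J : InjectiveResolution (ModuleCat.of R N))
    (h : ∀ f : M →ₗ[R] injTerm J (q + 1), (∀ z, injDiff J (q + 1) (f z) = 0) →
      ∃ y : M →ₗ[R] injTerm J q, ∀ z, injDiff J q (y z) = f z) : ExtVanishes R M N (q + 1) := by
  refine subsingleton_of_forall_eq 0 fun x => ?_
  obtain ⟨f, hf, rfl⟩ := J.extMk_surjective x _ rfl
  rw [J.extMk_eq_zero_iff _ _ rfl hf q rfl]
  obtain ⟨y, hy⟩ := h f.hom fun z => congr($hf z)
  exact ⟨ModuleCat.ofHom y, by ext z; exact hy z⟩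

lemma eq_zero_of_injDiff_comp_eq_zero (h : ExtVanishes R M N 0) {f : M →ₗ[R] injTerm J 0}
    (hf : ∀ z, injDiff J 0 (f z) = 0) : f = 0 := by
  let e := LinearEquiv.ofInjective (injAug J) (injAug_injective J)
  have he := h.linearMap_eq_zero
    (e.symm.toLinearMap ∘ₗ f.codRestrict _ fun z => ker_injDiff_zero_le_range_injAug J (hf z))
  ext z
  have hz := congr($he z)
  simp only [LinearMap.comp_apply, LinearEquiv.coe_coe, LinearMap.zero_apply,
    LinearEquiv.map_eq_zero_iff] at hz
  exact congrArg Subtype.val hz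

lemma exists_cocycle_extension {S : Submodule R M} (h : ExtVanishes R (M ⧸ S) N (q + 1))
    {f : M →ₗ[R] injTerm J q} (hf : ∀ z ∈ S, injDiff J q (f z) = 0) :
    ∃ f' : M →ₗ[R] injTerm J q, (∀ z, injDiff J q (f' z) = 0) ∧ ∀ z ∈ S, f' z = f z := by
  obtain ⟨y, hy⟩ := h.exists_injDiff_comp_eq (J := J) (f := S.liftQ (injDiff J q ∘ₗ f) hf)
    (by rintro ⟨z⟩; exact injDiff_injDiff J q _)
  refine ⟨f - y ∘ₗ S.mkQ, fun z => ?_, fun z hz => ?_⟩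
  · rw [LinearMap.sub_apply, map_sub, sub_eq_zero]
    exact (hy (S.mkQ z)).symm
  · simp [(Submodule.Quotient.mk_eq_zero S).mpr hz]

lemma exists_injDiff_comp_eq_of_surjective {g : M →ₗ[R] M''} (hg : Function.Surjective g)
    (h : ExtVanishes R (LinearMap.ker g) N (q + 1)) {f : M'' →ₗ[R] injTerm J (q + 2)}
    {y : M →ₗ[R] injTerm J (q + 1)} (hy : ∀ z, injDiff J (q + 1) (y z) = f (g z)) :
    ∃ y' : M'' →ₗ[R] injTerm J (q + 1), ∀ z, injDiff J (q + 1) (y' z) = f z := by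
  obtain ⟨u, hu⟩ := h.exists_injDiff_comp_eq (J := J) (f := y ∘ₗ (LinearMap.ker g).subtype)
    (by rintro ⟨z, hz⟩; simp [hy, LinearMap.mem_ker.mp hz])
  obtain ⟨v, hv⟩ := exists_linearMap_comp_eq_of_injective (injective_injTerm J q)
    (f := (LinearMap.ker g).subtype) (g := u) (by simp)
  obtain ⟨y', hy'⟩ := exists_linearMap_comp_eq_of_injective (injective_injTerm J (q + 1))
    (f := g) (g := y - injDiff J q ∘ₗ v) fun z hz => by
      have hvz : injDiff J q (v z) = y z := (congrArg _ (hv ⟨z, hz⟩)).trans (hu ⟨z, hz⟩)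
      simp [hvz]
  refine ⟨y', hg.forall.mpr fun z => ?_⟩
  simp [hy', hy, injDiff_injDiff]

end Injective

section Projective

variable {P : ProjectiveResolution (ModuleCat.of R M)} {p : ℕ}

lemma exists_comp_projDiff_eq (h : ExtVanishes R M N (p + 1)) {f : projTerm P (p + 1) →ₗ[R] N}
    (hf : ∀ z, f (projDiff P (p + 1) z) = 0) :
    ∃ y : projTerm P p →ₗ[R] N, ∀ z, y (projDiff P p z) = f z := by
  have hf' : P.complex.d (p + 2) (p + 1) ≫ ModuleCat.ofHom f = 0 := by
    ext z; exact hf z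
  obtain ⟨g, hg⟩ :=
    (P.extMk_eq_zero_iff (ModuleCat.ofHom f) _ rfl hf' p rfl).mp (h.elim _ _)
  exact ⟨g.hom, fun z => congr($hg z)⟩

lemma eq_zero_of_comp_projDiff_eq_zero (h : ExtVanishes R M N 0) {f : projTerm P 0 →ₗ[R] N}
    (hf : ∀ z, f (projDiff P 0 z) = 0) : f = 0 := by
  have hker : LinearMap.ker (projAug P) ≤ LinearMap.ker f := by
    intro z hz
    obtain ⟨y, rfl⟩ := (projDiff_projAug_exact P z).mp hz
    exact hf y
  let e := LinearMap.quotKerEquivOfSurjective (projAug P) (projAug_surjective P)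
  have he := h.linearMap_eq_zero ((LinearMap.ker (projAug P)).liftQ f hker ∘ₗ e.symm.toLinearMap)
  ext z
  have hz : e.symm (projAug P z) = Submodule.Quotient.mk z := (LinearEquiv.symm_apply_eq e).mpr rfl
  simpa [hz] using congr($he (projAug P z))

end Projective

end ExtVanishes

end Resolutions

section Torsion

variable {R : Type u} [CommRing R]

/-- The submodule `Γ_c(X)` of the elements of `X` killed by a power of the ideal `c`. -/
def powTorsion (c : Ideal R) (X : Type*) [AddCommGroup X] [Module R X] : Submodule R X where
  carrier := {z | ∃ t : ℕ, ∀ x ∈ c ^ t, x • z = 0}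
  zero_mem' := ⟨0, fun x _ => smul_zero x⟩
  add_mem' := by
    rintro y z ⟨s, hs⟩ ⟨t, ht⟩
    refine ⟨s + t, fun x hx => ?_⟩
    rw [smul_add, hs x (Ideal.pow_le_pow_right (by omega) hx),
      ht x (Ideal.pow_le_pow_right (by omega) hx), add_zero]
  smul_mem' := by
    rintro r z ⟨t, ht⟩
    exact ⟨t, fun x hx => by rw [smul_comm, ht x hx, smul_zero]⟩

section Module

variable {a b c : Ideal R} {X Y : Type*} [AddCommGroup X] [Module R X] [AddCommGroup Y] [Module R Y]

lemma map_mem_powTorsion (f : X →ₗ[R] Y) {z : X} (hz : z ∈ powTorsion c X) :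
    f z ∈ powTorsion c Y := by
  obtain ⟨t, ht⟩ := hz
  exact ⟨t, fun x hx => by rw [← map_smul, ht x hx, map_zero]⟩

lemma powTorsion_anti (h : a ≤ b) : powTorsion b X ≤ powTorsion a X := by
  rintro z ⟨t, ht⟩
  exact ⟨t, fun x hx => ht x (Ideal.pow_right_mono h t hx)⟩

lemma powTorsion_sup : powTorsion (a ⊔ b) X = powTorsion a X ⊓ powTorsion b X := by
  refine le_antisymm (le_inf (powTorsion_anti le_sup_left) (powTorsion_anti le_sup_right)) ?_
  rintro z ⟨⟨s, hs⟩, t, ht⟩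
  refine ⟨s + t, fun x hx => ?_⟩
  obtain ⟨y, hy, w, hw, rfl⟩ := Submodule.mem_sup.mp (Ideal.sup_pow_add_le_pow_sup_pow hx)
  rw [add_smul, hs y hy, ht w hw, add_zero]

lemma mem_torsionBySet_coe_iff {z : X} :
    z ∈ Submodule.torsionBySet R X c ↔ ∀ x ∈ c, x • z = 0 := by
  rw [Submodule.mem_torsionBySet_iff, SetCoe.forall]
  rfl

/-- The linear map `R ⧸ c → X` that sends `1` to an element `z` killed by `c`. -/
def cyclicMap (c : Ideal R) (z : X) (hz : ∀ x ∈ c, x • z = 0) : (R ⧸ c) →ₗ[R] X :=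
  Submodule.liftQ c (LinearMap.toSpanSingleton R X z) hz

@[simp] lemma cyclicMap_mk (z : X) (hz : ∀ x ∈ c, x • z = 0) (r : R) :
    cyclicMap c z hz (Submodule.Quotient.mk r) = r • z := rfl

lemma map_quotient_mk (f : (R ⧸ c) →ₗ[R] X) (x : R) :
    f (Submodule.Quotient.mk x) = x • f (Submodule.Quotient.mk 1) := by
  rw [← map_smul, ← Submodule.Quotient.mk_smul, smul_eq_mul, mul_one]

lemma smul_map_quotient_mk_one (f : (R ⧸ c) →ₗ[R] X) {x : R} (hx : x ∈ c) :
    x • f (Submodule.Quotient.mk 1) = 0 := by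
  rw [← map_quotient_mk, (Submodule.Quotient.mk_eq_zero c).mpr hx, map_zero]

end Module

lemma exists_pow_inf_pow_le_mul_pow [IsNoetherianRing R] (a b : Ideal R) (t : ℕ) :
    ∃ s, a ^ s ⊓ b ^ s ≤ (a * b) ^ t := by
  obtain ⟨k, hk⟩ := Ideal.exists_pow_inf_eq_pow_smul a (b ^ t : Submodule R R)
  refine ⟨k + t, ?_⟩
  calc a ^ (k + t) ⊓ b ^ (k + t)
      ≤ a ^ (k + t) • (⊤ : Submodule R R) ⊓ b ^ t :=
        le_inf (inf_le_left.trans (by simp))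
          (inf_le_right.trans (Ideal.pow_le_pow_right (by omega)))
    _ = a ^ t • (a ^ k • (⊤ : Submodule R R) ⊓ b ^ t) := by
        rw [hk (k + t) (by omega), Nat.add_sub_cancel_left]
    _ ≤ (a * b) ^ t := by
        rw [mul_pow]
        exact Ideal.mul_mono_right inf_le_right

lemma powTorsion_eq_sup [IsNoetherianRing R] {a b I : Ideal R} (ha : I ≤ a) (hb : I ≤ b) {k : ℕ}
    (hk : (a ⊓ b) ^ k ≤ I) {X : Type u} [AddCommGroup X] [Module R X] (hX : Module.Injective R X) :
    powTorsion I X = powTorsion a X ⊔ powTorsion b X := by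
  refine le_antisymm ?_ (sup_le (powTorsion_anti ha) (powTorsion_anti hb))
  rintro z ⟨t, ht⟩
  obtain ⟨s, hs⟩ := exists_pow_inf_pow_le_mul_pow a b (k * t)
  have hsI : a ^ s ⊓ b ^ s ≤ I ^ t := by
    refine hs.trans ?_
    rw [pow_mul]
    exact Ideal.pow_right_mono ((Ideal.pow_right_mono Ideal.mul_le_inf k).trans hk) t
  -- Extend `r ↦ r • z` from `R ⧸ (a ^ s ⊓ b ^ s)` to `R ⧸ a ^ s × R ⧸ b ^ s`.
  obtain ⟨h, hh⟩ := exists_linearMap_comp_eq_of_injective hX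
    (f := (Submodule.mkQ (a ^ s : Submodule R R)).prod (Submodule.mkQ (b ^ s : Submodule R R)))
    (g := LinearMap.toSpanSingleton R X z) fun x hx => by
      rw [LinearMap.ker_prod, Submodule.ker_mkQ, Submodule.ker_mkQ] at hx
      exact ht x (hsI hx)
  refine Submodule.mem_sup.mpr ⟨h (Submodule.Quotient.mk 1, 0), ⟨s, fun x hx => ?_⟩,
    h (0, Submodule.Quotient.mk 1), ⟨s, fun x hx => ?_⟩, ?_⟩
  · exact smul_map_quotient_mk_one (h ∘ₗ LinearMap.inl R _ _) hx
  · exact smul_map_quotient_mk_one (h ∘ₗ LinearMap.inr R _ _) hx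
  · rw [← map_add, Prod.mk_add_mk, add_zero, zero_add]
    exact (hh 1).trans (one_smul R z)

lemma ringKrullDim_quotient_pow_le (c : Ideal R) (t : ℕ) :
    ringKrullDim (R ⧸ c ^ t) ≤ ringKrullDim (R ⧸ c) := by
  rcases t.eq_zero_or_pos with rfl | ht
  · have : Subsingleton (R ⧸ c ^ 0) := by
      rw [pow_zero, Ideal.one_eq_top]; infer_instance
    rw [ringKrullDim_eq_bot_of_subsingleton]
    exact bot_le
  · rw [ringKrullDim_quotient, ringKrullDim_quotient, PrimeSpectrum.zeroLocus_pow _ ht.ne']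

section InjectiveResolution

variable {N : Type u} [AddCommGroup N] [Module R N] {J : InjectiveResolution (ModuleCat.of R N)}
  {q : ℕ} {c : Ideal R}

lemma cohomologyVanishes_torsionBySet (h : ExtVanishes R (R ⧸ c) N q) :
    CohomologyVanishes (injDiff J) (fun p => Submodule.torsionBySet R (injTerm J p) c) q := by
  have hcocycle {p : ℕ} {z : injTerm J p} (hz : ∀ x ∈ c, x • z = 0) (hd : injDiff J p z = 0)
      (w : R ⧸ c) : injDiff J p (cyclicMap c z hz w) = 0 := by
    obtain ⟨w, rfl⟩ := Submodule.Quotient.mk_surjective _ w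
    rw [cyclicMap_mk, map_smul, hd, smul_zero]
  cases q with
  | zero =>
    intro z hz hd
    have hz' := h.eq_zero_of_injDiff_comp_eq_zero (hcocycle (mem_torsionBySet_coe_iff.mp hz) hd)
    exact (one_smul R z).symm.trans congr($hz' (Submodule.Quotient.mk 1))
  | succ q =>
    intro z hz hd
    obtain ⟨y, hy⟩ := h.exists_injDiff_comp_eq (hcocycle (mem_torsionBySet_coe_iff.mp hz) hd)
    exact ⟨y (Submodule.Quotient.mk 1),
      mem_torsionBySet_coe_iff.mpr fun x hx => smul_map_quotient_mk_one y hx,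
      by rw [hy, cyclicMap_mk, one_smul]⟩

lemma cohomologyVanishes_powTorsion (h : ∀ t, ExtVanishes R (R ⧸ c ^ t) N q) :
    CohomologyVanishes (injDiff J) (fun p => powTorsion c (injTerm J p)) q := by
  cases q with
  | zero =>
    rintro z ⟨t, ht⟩ hd
    exact cohomologyVanishes_torsionBySet (h t) z (mem_torsionBySet_coe_iff.mpr ht) hd
  | succ q =>
    rintro z ⟨t, ht⟩ hd
    obtain ⟨y, hy, hyz⟩ :=
      cohomologyVanishes_torsionBySet (h t) z (mem_torsionBySet_coe_iff.mpr ht) hd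
    exact ⟨y, ⟨t, mem_torsionBySet_coe_iff.mp hy⟩, hyz⟩

variable [IsLocalRing R] [IsNoetherianRing R]

lemma cohomologyVanishes_powTorsion_of_ringKrullDim_quotient_lt [Module.Finite R N] {n e : ℕ}
    (hN : ∀ p < n, ExtVanishes R (ResidueField R) N p) (hc : ringKrullDim (R ⧸ c) < e)
    (hq : q + e ≤ n) :
    CohomologyVanishes (injDiff J) (fun p => powTorsion c (injTerm J p)) q :=
  cohomologyVanishes_powTorsion fun t =>
    .of_ringKrullDim_quotient_lt hN ((ringKrullDim_quotient_pow_le c t).trans_lt hc)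
      Ideal.annihilator_quotient.ge hq

lemma exists_cocycle_smul_eq (hk : ExtVanishes R (ResidueField R) N (q + 1)) {t : ℕ}
    (hc : maximalIdeal R ^ t ≤ c) {v : R} (hv : v ∉ c) {z : injTerm J q}
    (hd : injDiff J q z = 0) (hz : ∀ x ∈ maximalIdeal R, x • z = 0) :
    ∃ w : injTerm J q, injDiff J q w = 0 ∧ (∀ x ∈ c, x • w = 0) ∧ v • w = z := by
  -- Start from a map `R ⧸ c → J q` that sends `r * v` to `r • z`.
  obtain ⟨f, hf⟩ := exists_linearMap_comp_eq_of_injective (injective_injTerm J q)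
    (f := LinearMap.toSpanSingleton R (R ⧸ c) (Submodule.Quotient.mk v))
    (g := LinearMap.toSpanSingleton R _ z) fun r hr => by
      rw [LinearMap.mem_ker, LinearMap.toSpanSingleton_apply, ← Submodule.Quotient.mk_smul,
        Submodule.Quotient.mk_eq_zero, smul_eq_mul] at hr
      exact hz r fun hru => hv ((Ideal.unit_mul_mem_iff_mem c hru).mp hr)
  have hfd : ∀ s ∈ Submodule.span R {(Submodule.Quotient.mk v : R ⧸ c)},
      injDiff J q (f s) = 0 := by
    intro s hs
    obtain ⟨r, rfl⟩ := Submodule.mem_span_singleton.mp hs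
    exact (congrArg _ (hf r)).trans (by simp [hd])
  have hExt : ExtVanishes R
      ((R ⧸ c) ⧸ Submodule.span R {(Submodule.Quotient.mk v : R ⧸ c)}) N (q + 1) :=
    .of_pow_maximalIdeal_le_annihilator hk <| hc.trans <| Ideal.annihilator_quotient.ge.trans <|
      LinearMap.annihilator_le_of_surjective (Submodule.mkQ _) (Submodule.mkQ_surjective _)
  obtain ⟨f', hf'd, hf'⟩ := hExt.exists_cocycle_extension hfd
  refine ⟨f' (Submodule.Quotient.mk 1), hf'd _, fun x hx => smul_map_quotient_mk_one f' hx, ?_⟩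
  rw [← map_quotient_mk, hf' _ (Submodule.mem_span_singleton_self _)]
  simpa using hf 1

lemma exists_residueField_linearMap_of_mem_powTorsion
    (hk : ExtVanishes R (ResidueField R) N (q + 1)) {f : ResidueField R →ₗ[R] injTerm J (q + 2)}
    {y : injTerm J (q + 1)} (hy : y ∈ powTorsion (maximalIdeal R) (injTerm J (q + 1)))
    (hyf : injDiff J (q + 1) y = f 1) :
    ∃ y' : ResidueField R →ₗ[R] injTerm J (q + 1), ∀ z, injDiff J (q + 1) (y' z) = f z := by
  obtain ⟨t, ht⟩ := hy
  have ht' : ∀ x ∈ maximalIdeal R ^ (t + 1), x • y = 0 :=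
    fun x hx => ht x (Ideal.pow_le_pow_right t.le_succ hx)
  let π : (R ⧸ maximalIdeal R ^ (t + 1)) →ₗ[R] ResidueField R :=
    Submodule.factor (Ideal.pow_le_self t.succ_ne_zero)
  have hker : ExtVanishes R (LinearMap.ker π) N (q + 1) :=
    .of_pow_maximalIdeal_le_annihilator hk <| Ideal.annihilator_quotient.ge.trans <|
      LinearMap.annihilator_le_of_injective (Submodule.subtype _) (Submodule.injective_subtype _)
  refine hker.exists_injDiff_comp_eq_of_surjective (Submodule.factor_surjective _)
    (y := cyclicMap _ y ht') fun z => ?_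
  obtain ⟨r, rfl⟩ := Submodule.Quotient.mk_surjective _ z
  rw [cyclicMap_mk, map_smul, hyf, ← map_smul]
  congr 1
  exact (map_quotient_mk π r).symm

lemma exists_socle_cocycle_not_boundary (J : InjectiveResolution (ModuleCat.of R N))
    (hk : ExtVanishes R (ResidueField R) N (q + 1))
    (hk' : ¬ ExtVanishes R (ResidueField R) N (q + 2)) :
    ∃ z : injTerm J (q + 2), injDiff J (q + 2) z = 0 ∧ (∀ x ∈ maximalIdeal R, x • z = 0) ∧
      ∀ y ∈ powTorsion (maximalIdeal R) (injTerm J (q + 1)), injDiff J (q + 1) y ≠ z := by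
  obtain ⟨f, hf, hfb⟩ : ∃ f : ResidueField R →ₗ[R] injTerm J (q + 2),
      (∀ z, injDiff J (q + 2) (f z) = 0) ∧
      ¬ ∃ y : ResidueField R →ₗ[R] injTerm J (q + 1), ∀ z, injDiff J (q + 1) (y z) = f z := by
    by_contra! hcon
    exact hk' (.of_forall_exists_injDiff_comp_eq J hcon)
  exact ⟨f 1, hf 1, fun x hx => smul_map_quotient_mk_one (c := maximalIdeal R) f hx,
    fun y hy hyf => hfb (exists_residueField_linearMap_of_mem_powTorsion hk hy hyf)⟩

end InjectiveResolution

end Torsion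

lemma extVanishes_residueField_self_iff {R : Type u} [CommRing R] [IsLocalRing R]
    [IsNoetherianRing R] (hR : IsRegularLocalRing R) {n q : ℕ} (hn : ringKrullDim R = n) :
    ExtVanishes R (ResidueField R) R q ↔ q ≠ n := by
  obtain ⟨rs, hrs, hrsm⟩ := exists_isRegular_ofList_eq_maximalIdeal hR
  have hlen : ringKrullDim R = rs.length :=
    (length_eq_ringKrullDim_of_ofList_eq_maximalIdeal hrs hrsm).symm
  obtain rfl : rs.length = n := by exact_mod_cast hlen.symm.trans hn
  refine ⟨?_, fun hq => ?_⟩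
  · rintro h rfl
    exact not_extVanishes_residueField_of_ringKrullDim_eq_length hrs hlen h
  · rcases hq.lt_or_gt with hq | hq
    · exact extVanishes_residueField_of_lt_length hrs hq
    · exact (extVanishes_quotient_ofList_of_length_lt hrs hq).of_equiv_left
        (Submodule.quotEquivOfEq _ _ hrsm.symm)

section Subcomplex

variable {R : Type u} [CommRing R] {J : ℕ → Type u} [∀ q, AddCommGroup (J q)]
  [∀ q, Module R (J q)] (d : ∀ q, J q →ₗ[R] J (q + 1)) (G : ∀ q, Submodule R (J q))

/-- The cocycles of degree `r + 1` of the subcomplex `G` of `J`. -/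
def subcomplexCocycles (r : ℕ) : Submodule R (J (r + 1)) := G (r + 1) ⊓ LinearMap.ker (d (r + 1))

/-- The cohomology of degree `r + 1` of the subcomplex `G` of `J`. -/
abbrev subcomplexCohomology (r : ℕ) : Type u :=
  subcomplexCocycles d G r ⧸ ((G r).map (d r)).submoduleOf (subcomplexCocycles d G r)

variable {d G}

lemma mkQ_subcomplexCocycles_eq_zero_iff {r : ℕ} {z : subcomplexCocycles d G r} :
    (((G r).map (d r)).submoduleOf (subcomplexCocycles d G r)).mkQ z = 0 ↔
      (z : J (r + 1)) ∈ (G r).map (d r) :=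
  Submodule.Quotient.mk_eq_zero _

section ProjectiveResolution

variable {M : Type u} [AddCommGroup M] [Module R M] {P : ProjectiveResolution (ModuleCat.of R M)}

lemma homCohomologyVanishes_of_extVanishes {r j : ℕ}
    (h : ExtVanishes R M (subcomplexCohomology d G r) j) :
    HomCohomologyVanishes (projDiff P) d G r j := by
  let B := ((G r).map (d r)).submoduleOf (subcomplexCocycles d G r)
  cases j with
  | zero =>
    intro w hwG hwd hwb z
    let w' := w.codRestrict (subcomplexCocycles d G r) fun y => ⟨hwG y, hwd y⟩
    have hw' : B.mkQ ∘ₗ w' = 0 := h.eq_zero_of_comp_projDiff_eq_zero fun y =>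
      mkQ_subcomplexCocycles_eq_zero_iff.mpr (hwb y)
    exact mkQ_subcomplexCocycles_eq_zero_iff.mp congr($hw' z)
  | succ j =>
    intro w hwG hwd hwb
    let w' := w.codRestrict (subcomplexCocycles d G r) fun y => ⟨hwG y, hwd y⟩
    obtain ⟨f, hf⟩ := h.exists_comp_projDiff_eq (P := P) (f := B.mkQ ∘ₗ w') fun y =>
      mkQ_subcomplexCocycles_eq_zero_iff.mpr (hwb y)
    obtain ⟨f', rfl⟩ := Module.projective_lifting_property B.mkQ f B.mkQ_surjective
    refine ⟨(subcomplexCocycles d G r).subtype ∘ₗ f', fun y => (f' y).2.1, fun y => (f' y).2.2,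
      fun y => (mkQ_subcomplexCocycles_eq_zero_iff (z := w' y - f' (projDiff P j y))).mp ?_⟩
    rw [map_sub, sub_eq_zero]
    exact (hf y).symm

lemma exists_hasLiftTower {g K m : ℕ} (hG : ∀ q, g < q → CohomologyVanishes d G q)
    (hK : g + K ≤ m) {φ : projTerm P 0 →ₗ[R] J (m + 1)} (hφb : ∀ y, φ (projDiff P 0 y) = 0)
    (hφG : ∀ y, φ y ∈ G (m + 1)) (hφd : ∀ y, d (m + 1) (φ y) = 0) :
    ∃ h : projTerm P 0 →ₗ[R] J m, (∀ y, h y ∈ G m) ∧ (∀ y, d m (h y) = φ y) ∧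
      HasLiftTower (projDiff P) d G K 0 m h := by
  obtain ⟨h, hh, hhφ⟩ := exists_linearMap_lift_mem (f := φ) fun y =>
    hG (m + 1) (by omega) _ (hφG y) (hφd y)
  exact ⟨h, hh, hhφ, .of_cohomologyVanishes (fun p y => (projDiff_exact P p).apply_apply_eq_zero y)
    hG hK hh fun y => by rw [hhφ, hφb]⟩

end ProjectiveResolution

end Subcomplex

section MayerVietoris

variable {R : Type u} [CommRing R] {M N : Type u} [AddCommGroup M] [Module R M] [AddCommGroup N]
  [Module R N]

/-- `HasTorsionLift P J a K φ` says that `φ : P 0 → J (m + 1)` lifts to a map `P 0 → Γ_a(J m)` that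
extends to a zigzag of `K` further maps `P p → Γ_a(J (m - p))`. So the class of `φ` comes from the
truncation `τ_{≤ m-K} Γ_a(J)`. -/
def HasTorsionLift (P : ProjectiveResolution (ModuleCat.of R M))
    (J : InjectiveResolution (ModuleCat.of R N)) (a : Ideal R) (K : ℕ) {m : ℕ}
    (φ : projTerm P 0 →ₗ[R] injTerm J (m + 1)) : Prop :=
  ∃ h : projTerm P 0 →ₗ[R] injTerm J m, (∀ y, h y ∈ powTorsion a (injTerm J m)) ∧
    (∀ y, injDiff J m (h y) = φ y) ∧
    HasLiftTower (projDiff P) (injDiff J) (fun q => powTorsion a (injTerm J q)) K 0 m h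

variable {J : InjectiveResolution (ModuleCat.of R N)} {m i : ℕ}

lemma smul_mem_powTorsion_of_mem_torsionBySet {a F : Ideal R} {v : R} (hv : ∀ x ∈ a, v * x ∈ F)
    {z : M} (hz : z ∈ Submodule.torsionBySet R M F) : v • z ∈ powTorsion a M :=
  ⟨1, fun x hx => by
    rw [smul_smul, mul_comm]
    exact mem_torsionBySet_coe_iff.mp hz _ (hv x (by simpa using hx))⟩

section Local

variable [IsLocalRing R] [IsNoetherianRing R]

lemma exists_notMem_sup_pow_maximalIdeal {F : Ideal R} {v : R} (hv : v ∉ F) :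
    ∃ t, v ∉ F ⊔ maximalIdeal R ^ t := by
  by_contra! h
  have hF : F ≠ ⊤ := fun hF => hv (hF ▸ Submodule.mem_top)
  have : Nontrivial (R ⧸ F) := Ideal.Quotient.nontrivial_iff.mpr hF
  have hbot := Ideal.iInf_pow_smul_eq_bot_of_isLocalRing (M := R ⧸ F) (maximalIdeal R)
    (maximalIdeal.isMaximal R).ne_top
  refine hv ((Submodule.Quotient.mk_eq_zero F).mp ?_)
  rw [← Submodule.mem_bot R, ← hbot, Submodule.mem_iInf]
  intro t
  obtain ⟨y, hy, w, hw, rfl⟩ := Submodule.mem_sup.mp (h t)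
  have hyw : (Submodule.Quotient.mk (y + w) : R ⧸ F) = w • Submodule.Quotient.mk 1 := by
    rw [← Submodule.Quotient.mk_smul, smul_eq_mul, mul_one, Submodule.Quotient.mk_add,
      (Submodule.Quotient.mk_eq_zero F).mpr hy, zero_add]
  rw [hyw]
  exact Submodule.smul_mem_smul hw Submodule.mem_top

lemma hasTorsionLift_of_isRegular (hk : ExtVanishes R (ResidueField R) N (m + 2)) {a : Ideal R}
    {rs : List R} (hrs : IsRegular R rs) {v : R} (hva : ∀ x ∈ a, v * x ∈ Ideal.ofList rs) {K : ℕ}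
    (hK : rs.length + K ≤ m) {t : ℕ} (hv : v ∉ Ideal.ofList rs ⊔ maximalIdeal R ^ t)
    (P : ProjectiveResolution (ModuleCat.of R (R ⧸ maximalIdeal R ^ t))) {z : injTerm J (m + 1)}
    (hd : injDiff J (m + 1) z = 0) (hz : ∀ x ∈ maximalIdeal R, x • z = 0)
    (hzt : ∀ x ∈ maximalIdeal R ^ t, x • z = 0) :
    HasTorsionLift P J a K (cyclicMap (maximalIdeal R ^ t) z hzt ∘ₗ projAug P) := by
  obtain ⟨w, hwd, hw, rfl⟩ := exists_cocycle_smul_eq hk le_sup_right hv hd hz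
  let ξ := cyclicMap (maximalIdeal R ^ t) w fun x hx => hw x (Ideal.mem_sup_right hx)
  have hξF (y) : ξ y ∈ Submodule.torsionBySet R (injTerm J (m + 1)) (Ideal.ofList rs) := by
    obtain ⟨y, rfl⟩ := Submodule.Quotient.mk_surjective _ y
    exact Submodule.smul_mem _ _
      (mem_torsionBySet_coe_iff.mpr fun x hx => hw x (Ideal.mem_sup_left hx))
  have hξd (y) : injDiff J (m + 1) (ξ y) = 0 := by
    obtain ⟨y, rfl⟩ := Submodule.Quotient.mk_surjective _ y
    rw [cyclicMap_mk, map_smul, hwd, smul_zero]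
  have hvξ (y) : v • ξ y = cyclicMap _ (v • w) hzt y := by
    obtain ⟨y, rfl⟩ := Submodule.Quotient.mk_surjective _ y
    rw [cyclicMap_mk, cyclicMap_mk, smul_comm]
  have hF (q) (hq : rs.length < q) :=
    cohomologyVanishes_torsionBySet (J := J) (extVanishes_quotient_ofList_of_length_lt hrs hq)
  have hva' (q) := fun y hy =>
    smul_mem_powTorsion_of_mem_torsionBySet (M := injTerm J q) (z := y) hva hy
  obtain ⟨l, hlF, hlξ, hl⟩ := exists_hasLiftTower (P := P) hF hK (φ := ξ ∘ₗ projAug P)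
    (fun y => by
      rw [LinearMap.comp_apply, (projDiff_projAug_exact P).apply_apply_eq_zero, map_zero])
    (fun y => hξF _) (fun y => hξd _)
  exact ⟨v • l, fun y => hva' m _ (hlF y), fun y => by simp [hlξ, hvξ], hl.smul hva'⟩

/-- The annihilator of `a` modulo a maximal regular sequence in `a` is nonzero, which makes every
socle class a multiple of a class supported on `a` that lives in low degrees. -/
lemma exists_forall_hasTorsionLift (hk : ExtVanishes R (ResidueField R) N (m + 2)) {a : Ideal R}
    {n e K : ℕ} (hn : ringKrullDim R = n) (he : e ≤ ringKrullDim (R ⧸ a)) (hK : n + K ≤ e + m)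
    {z : injTerm J (m + 1)} (hd : injDiff J (m + 1) z = 0) (hz : ∀ x ∈ maximalIdeal R, x • z = 0) :
    ∃ s, ∀ t ≥ s, ∀ (P : ProjectiveResolution (ModuleCat.of R (R ⧸ maximalIdeal R ^ t)))
      (hzt : ∀ x ∈ maximalIdeal R ^ t, x • z = 0),
      HasTorsionLift P J a K (cyclicMap (maximalIdeal R ^ t) z hzt ∘ₗ projAug P) := by
  have ha : a ≠ ⊤ := by
    rintro rfl
    simp [ringKrullDim_eq_bot_of_subsingleton] at he
  obtain ⟨rs, hrs, hrsa, v, hv, hva⟩ :=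
    exists_isRegular_and_notMem_and_mul_mem (le_maximalIdeal ha)
  have hlen : e + rs.length ≤ n := by
    exact_mod_cast (add_le_add_left he _).trans
      ((ringKrullDim_quotient_add_length_le hrs hrsa).trans hn.le)
  obtain ⟨s, hs⟩ := exists_notMem_sup_pow_maximalIdeal hv
  refine ⟨s, fun t hst P hzt => ?_⟩
  have hmono : Ideal.ofList rs ⊔ maximalIdeal R ^ t ≤ Ideal.ofList rs ⊔ maximalIdeal R ^ s :=
    sup_le_sup_left (Ideal.pow_le_pow_right hst) _
  exact hasTorsionLift_of_isRegular hk hrs hva (by omega) (fun hvt => hs (hmono hvt)) P hd hz hzt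

end Local

lemma exists_mem_powTorsion_injDiff_eq {c : Ideal R} {t : ℕ}
    (P : ProjectiveResolution (ModuleCat.of R (R ⧸ c ^ t))) {z : injTerm J (m + 1)}
    (hzt : ∀ x ∈ c ^ t, x • z = 0) {u : projTerm P 0 →ₗ[R] injTerm J m}
    (hu : ∀ y, injDiff J m (u y) = cyclicMap (c ^ t) z hzt (projAug P y))
    (hub : ∀ y, u (projDiff P 0 y) = 0) :
    ∃ y ∈ powTorsion c (injTerm J m), injDiff J m y = z := by
  obtain ⟨p, hp⟩ := projAug_surjective P (Submodule.Quotient.mk 1)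
  refine ⟨u p, ⟨t, fun x hx => ?_⟩, by rw [hu, hp, cyclicMap_mk, one_smul]⟩
  have hxp : projAug P (x • p) = 0 := by
    rw [map_smul, hp, ← Submodule.Quotient.mk_smul, smul_eq_mul, mul_one,
      (Submodule.Quotient.mk_eq_zero _).mpr hx]
  obtain ⟨y, hy⟩ := (projDiff_projAug_exact P _).mp hxp
  rw [← map_smul, ← hy, hub]

lemma exists_lift_of_hasTorsionLift [IsNoetherianRing R] {I a b : Ideal R} (ha : I ≤ a)
    (hb : I ≤ b) {k : ℕ} (hk : (a ⊓ b) ^ k ≤ I) (him : i + 1 ≤ m)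
    (hI : ∀ j r, j ≤ i → j + r + 1 = m → ExtVanishes R M
      (subcomplexCohomology (injDiff J) (fun q => powTorsion I (injTerm J q)) r) j)
    (hab : ∀ q, q + i ≤ m →
      CohomologyVanishes (injDiff J) (fun q => powTorsion (a ⊔ b) (injTerm J q)) q)
    {P : ProjectiveResolution (ModuleCat.of R M)} {φ : projTerm P 0 →ₗ[R] injTerm J (m + 1)}
    (hφa : HasTorsionLift P J a (i + 1) φ) (hφb : HasTorsionLift P J b (i + 1) φ) :
    ∃ u : projTerm P 0 →ₗ[R] injTerm J m, (∀ y, injDiff J m (u y) = φ y) ∧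
      ∀ y, u (projDiff P 0 y) = 0 := by
  obtain ⟨h, hha, hhφ, hhtower⟩ := hφa
  obtain ⟨k, hkb, hkφ, hktower⟩ := hφb
  have hsup : (fun q => powTorsion I (injTerm J q)) =
      (fun q => powTorsion a (injTerm J q)) ⊔ fun q => powTorsion b (injTerm J q) :=
    funext fun q => powTorsion_eq_sup ha hb hk (injective_injTerm J q)
  have hinf : (fun q => powTorsion (a ⊔ b) (injTerm J q)) =
      (fun q => powTorsion a (injTerm J q)) ⊓ fun q => powTorsion b (injTerm J q) :=
    funext fun q => powTorsion_sup
  rw [hsup] at hI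
  rw [hinf] at hab
  exact exists_lift_comp_eq_zero (injDiff_injDiff J) (fun q z => map_mem_powTorsion _)
    (fun q z => map_mem_powTorsion _) (injective_injTerm J) (projDiff_exact P) him hha hkb hhφ hkφ
    hhtower hktower (fun j r hj hjr => homCohomologyVanishes_of_extVanishes (hI j r hj hjr)) hab

theorem lt_ringKrullDim_quotient_sup [IsLocalRing R] [IsNoetherianRing R]
    (hR : IsRegularLocalRing R) {n : ℕ} (hn : ringKrullDim R = n)
    (J : InjectiveResolution (ModuleCat.of R R)) {I a b : Ideal R} (ha : I ≤ a) (hb : I ≤ b)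
    {k : ℕ} (hk : (a ⊓ b) ^ k ≤ I) (hda : (i + 2 : ℕ) ≤ ringKrullDim (R ⧸ a))
    (hdb : (i + 2 : ℕ) ≤ ringKrullDim (R ⧸ b))
    (hI : ∀ j r, j ≤ i → j + r + 2 = n → ExtVanishes R (ResidueField R)
      (subcomplexCohomology (injDiff J) (fun q => powTorsion I (injTerm J q)) r) j) :
    i < ringKrullDim (R ⧸ (a ⊔ b)) := by
  by_contra! hi
  have hin : i + 2 ≤ n := by
    exact_mod_cast (hda.trans (ringKrullDim_quotient_le a)).trans hn.le
  obtain ⟨m, rfl⟩ : ∃ m, n = m + 2 := ⟨n - 2, by omega⟩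
  have hExt {q : ℕ} (hq : q ≠ m + 2) : ExtVanishes R (ResidueField R) R q :=
    (extVanishes_residueField_self_iff hR hn).mpr hq
  obtain ⟨z, hzd, hz, hznot⟩ := exists_socle_cocycle_not_boundary J (hExt (by omega))
    ((extVanishes_residueField_self_iff hR hn).not.mpr (by simp) : ¬ ExtVanishes R _ R (m + 2))
  have hlift {c : Ideal R} (hc : (i + 2 : ℕ) ≤ ringKrullDim (R ⧸ c)) :=
    exists_forall_hasTorsionLift (m := m + 1) (K := i + 1) (hExt (by omega)) hn hc (by omega) hzd hz
  obtain ⟨s, hs⟩ := hlift hda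
  obtain ⟨s', hs'⟩ := hlift hdb
  let t := s + s' + 1
  have hzt : ∀ x ∈ maximalIdeal R ^ t, x • z = 0 :=
    fun x hx => hz x (Ideal.pow_le_self (by omega) hx)
  let P := projectiveResolution (ModuleCat.of R (R ⧸ maximalIdeal R ^ t))
  obtain ⟨u, hu, hub⟩ := exists_lift_of_hasTorsionLift ha hb hk (i := i) (by omega)
    (fun j r hj hjr => .of_pow_maximalIdeal_le_annihilator (hI j r hj (by omega))
      Ideal.annihilator_quotient.ge)
    (fun q hq => cohomologyVanishes_powTorsion_of_ringKrullDim_quotient_lt (n := m + 2) (e := i + 1)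
      (fun p hp => hExt hp.ne) (hi.trans_lt (by exact_mod_cast i.lt_succ_self)) (by omega))
    (hs t (by omega) P hzt) (hs' t (by omega) P hzt)
  obtain ⟨y, hy, hyz⟩ := exists_mem_powTorsion_injDiff_eq P hzt hu hub
  exact hznot y hy hyz

end MayerVietoris

section CocycleClass

variable {R : Type u} [CommRing R] (K : CochainComplex (ModuleCat.{u} R) ℕ) (q : ℕ)

/-- The identification of the kernel of the differential of `K` with the abstract cycles of `K`. -/
def kerToCycles : LinearMap.ker (K.d q (q + 1)).hom →ₗ[R] K.cycles q :=
  (K.liftCycles (A := ModuleCat.of R (LinearMap.ker (K.d q (q + 1)).hom))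
    (ModuleCat.ofHom (LinearMap.ker (K.d q (q + 1)).hom).subtype) (q + 1) (by simp)
    (by ext z; exact z.2)).hom

lemma iCycles_kerToCycles (z : LinearMap.ker (K.d q (q + 1)).hom) :
    (K.iCycles q).hom (kerToCycles K q z) = z :=
  congr($(K.liftCycles_i (A := ModuleCat.of R (LinearMap.ker (K.d q (q + 1)).hom))
    (ModuleCat.ofHom (LinearMap.ker (K.d q (q + 1)).hom).subtype) (q + 1) (by simp)
    (by ext z; exact z.2)) z)

lemma iCycles_injective : Function.Injective (K.iCycles q).hom :=
  (ModuleCat.mono_iff_injective (K.iCycles q)).mp inferInstance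

/-- The class of a cocycle of `K` in the cohomology of `K`. -/
def cocycleClass : LinearMap.ker (K.d q (q + 1)).hom →ₗ[R] K.homology q :=
  (K.homologyπ q).hom ∘ₗ kerToCycles K q

lemma cocycleClass_surjective : Function.Surjective (cocycleClass K q) := by
  intro x
  obtain ⟨y, rfl⟩ := (ModuleCat.epi_iff_surjective (K.homologyπ q)).mp inferInstance x
  let z : LinearMap.ker (K.d q (q + 1)).hom :=
    ⟨(K.iCycles q).hom y, congr($(K.iCycles_d q (q + 1)) y)⟩
  have hz : kerToCycles K q z = y := iCycles_injective K q (iCycles_kerToCycles K q z)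
  exact ⟨z, congrArg (K.homologyπ q).hom hz⟩

variable {q} in
lemma cocycleClass_eq_zero_iff {p : ℕ} (hp : (ComplexShape.up ℕ).prev q = p)
    (z : LinearMap.ker (K.d q (q + 1)).hom) :
    cocycleClass K q z = 0 ↔ ∃ y, (K.d p q).hom y = z := by
  have hexact : (ShortComplex.mk _ _ (K.toCycles_comp_homologyπ p q)).Exact :=
    ShortComplex.exact_of_g_is_cokernel _ (K.homologyIsCokernel p q hp)
  refine ((ShortComplex.ShortExact.moduleCat_exact_iff_function_exact _).mp hexact
    (kerToCycles K q z)).trans (exists_congr fun y => ?_)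
  rw [← (iCycles_injective K q).eq_iff, iCycles_kerToCycles]
  exact Eq.congr_left (congr($(K.toCycles_i p q) y))

variable {K q} in
lemma homologyMap_cocycleClass {L : CochainComplex (ModuleCat.{u} R) ℕ} (φ : K ⟶ L)
    {z : LinearMap.ker (K.d q (q + 1)).hom} {w : LinearMap.ker (L.d q (q + 1)).hom}
    (h : (φ.f q).hom z = w) :
    (HomologicalComplex.homologyMap φ q).hom (cocycleClass K q z) = cocycleClass L q w := by
  have hzw : (HomologicalComplex.cyclesMap φ q).hom (kerToCycles K q z) = kerToCycles L q w := by
    apply iCycles_injective L q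
    rw [iCycles_kerToCycles, ← h, ← iCycles_kerToCycles K q z]
    exact congr($(HomologicalComplex.cyclesMap_i φ q) _)
  rw [cocycleClass, cocycleClass, LinearMap.comp_apply, LinearMap.comp_apply, ← hzw]
  exact congr($(HomologicalComplex.homologyπ_naturality φ q) _)

end CocycleClass

section DerivedExt

open Opposite

variable {R : Type u} [CommRing R]

/-- The linear map `E → E'` induced by a linear map `g : Z → E'` that vanishes on the kernel of a
surjective linear map `f : Z → E`. -/
def descend {Z E E' : Type*} [AddCommGroup Z] [Module R Z] [AddCommGroup E] [Module R E]
    [AddCommGroup E'] [Module R E'] (f : Z →ₗ[R] E) (hf : Function.Surjective f)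
    (g : Z →ₗ[R] E') (h : LinearMap.ker f ≤ LinearMap.ker g) : E →ₗ[R] E' :=
  (LinearMap.ker f).liftQ g h ∘ₗ (f.quotKerEquivOfSurjective hf).symm.toLinearMap

lemma descend_apply {Z E E' : Type*} [AddCommGroup Z] [Module R Z] [AddCommGroup E] [Module R E]
    [AddCommGroup E'] [Module R E'] (f : Z →ₗ[R] E) (hf : Function.Surjective f)
    (g : Z →ₗ[R] E') (h : LinearMap.ker f ≤ LinearMap.ker g) (z : Z) :
    descend f hf g h (f z) = g z := by
  rw [descend, LinearMap.comp_apply, LinearEquiv.coe_coe, f.quotKerEquivOfSurjective_symm_apply,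
    Submodule.liftQ_apply]

/-- The chain map `Hom(L, Y) → Hom(K, Y)` induced by a chain map `φ : K → L`. -/
def linearYonedaObjMap {K L : ChainComplex (ModuleCat.{u} R) ℕ} (φ : K ⟶ L)
    (Y : ModuleCat.{u} R) : L.linearYonedaObj R Y ⟶ K.linearYonedaObj R Y :=
  (HomologicalComplex.unopFunctor _ _).map
    ((((linearYoneda R (ModuleCat.{u} R)).obj Y).rightOp.mapHomologicalComplex _).map φ).op

variable {M M' : ModuleCat.{u} R} {g : M ⟶ M'} {P : ProjectiveResolution M}
  {Q : ProjectiveResolution M'}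

lemma map_isoExt_hom (φ : ProjectiveResolution.Hom P Q g) (q : ℕ) (Y : ModuleCat.{u} R) :
    ((_root_.Ext R (ModuleCat.{u} R) q).map g.op).app Y ≫ (P.isoExt (R := R) q Y).hom =
      (Q.isoExt (R := R) q Y).hom ≫
        HomologicalComplex.homologyMap (linearYonedaObjMap φ.hom Y) q := by
  let F := ((linearYoneda R (ModuleCat.{u} R)).obj Y).rightOp
  have derived := congrArg Quiver.Hom.unop
    (ProjectiveResolution.isoLeftDerivedObj_inv_naturality g P Q φ.hom
      φ.hom_f_zero_comp_π_f_zero F q)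
  have unop : CommSq (F.mapHomologicalComplex _ |>.obj Q.complex |>.homologyUnop q).hom
      (HomologicalComplex.homologyMap (linearYonedaObjMap φ.hom Y) q)
      ((F.mapHomologicalComplex _ ⋙ HomologicalComplex.homologyFunctor _ _ q).map φ.hom).unop
      (F.mapHomologicalComplex _ |>.obj P.complex |>.homologyUnop q).hom :=
    ⟨congrArg Quiver.Hom.unop
      (HomologicalComplex.homologyOp_hom_naturality (linearYonedaObjMap φ.hom Y) q)⟩
  exact ((CommSq.mk derived.symm).horiz_comp unop.horiz_inv).w.symm

/-- The cocycles of degree `q` of the complex `Hom(P, Y)`. -/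
def projCocycles (P : ProjectiveResolution M) (Y : ModuleCat.{u} R) (q : ℕ) :
    Submodule R (P.complex.X q ⟶ Y) :=
  LinearMap.ker ((P.complex.linearYonedaObj R Y).d q (q + 1)).hom

lemma mem_projCocycles {Y : ModuleCat.{u} R} {q : ℕ} {c : P.complex.X q ⟶ Y} :
    c ∈ projCocycles P Y q ↔ P.complex.d (q + 1) q ≫ c = 0 := Iff.rfl

lemma comp_mem_projCocycles (φ : ProjectiveResolution.Hom P Q g) {Y : ModuleCat.{u} R} {q : ℕ}
    (z : projCocycles Q Y q) : φ.hom.f q ≫ z.1 ∈ projCocycles P Y q := by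
  rw [mem_projCocycles, ← φ.hom.comm_assoc, mem_projCocycles.mp z.2, Limits.comp_zero]

/-- `Ext` as a derived functor, which is the one that defines local cohomology and the Lyubeznik
numbers, in contrast to the localization-theoretic `CategoryTheory.Abelian.Ext`. -/
abbrev DerivedExt (M Y : ModuleCat.{u} R) (q : ℕ) : ModuleCat.{u} R :=
  ((_root_.Ext R (ModuleCat.{u} R) q).obj (op M)).obj Y

/-- The map `DerivedExt M' Y q → DerivedExt M Y q` induced by `g : M → M'`. -/
abbrev derivedExtMap (g : M ⟶ M') (Y : ModuleCat.{u} R) (q : ℕ) :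
    DerivedExt M' Y q →ₗ[R] DerivedExt M Y q :=
  (((_root_.Ext R (ModuleCat.{u} R) q).map g.op).app Y).hom

section Classes

variable (P) (Y : ModuleCat.{u} R) (q : ℕ)

/-- The class in `DerivedExt` of a cocycle of `Hom(P, Y)`. -/
def derivedExtClass : projCocycles P Y q →ₗ[R] DerivedExt M Y q :=
  (P.isoExt (R := R) q Y).inv.hom ∘ₗ cocycleClass (P.complex.linearYonedaObj R Y) q

lemma derivedExtClass_surjective : Function.Surjective (derivedExtClass P Y q) :=
  ((ModuleCat.epi_iff_surjective (P.isoExt (R := R) q Y).inv).mp inferInstance).comp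
    (cocycleClass_surjective _ _)

variable {P Y q} in
lemma derivedExtClass_eq_zero_iff {p : ℕ} (hp : (ComplexShape.up ℕ).prev q = p)
    (z : projCocycles P Y q) :
    derivedExtClass P Y q z = 0 ↔ ∃ y : P.complex.X p ⟶ Y, P.complex.d q p ≫ y = z := by
  have hinj := (ModuleCat.mono_iff_injective (P.isoExt (R := R) q Y).inv).mp inferInstance
  exact (map_eq_zero_iff (P.isoExt (R := R) q Y).inv.hom hinj).trans
    (cocycleClass_eq_zero_iff (P.complex.linearYonedaObj R Y) hp z)

/-- The class in `Abelian.Ext` of a cocycle of `Hom(P, Y)`. -/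
def extClass : projCocycles P Y q →ₗ[R] Abelian.Ext M Y q where
  toFun z := P.extMk z.1 (q + 1) rfl (mem_projCocycles.mp z.2)
  map_add' z w := (P.add_extMk _ _ _ _ _ _).symm
  map_smul' r z := by
    rw [RingHom.id_apply, Abelian.Ext.smul_eq_comp_mk₀, P.extMk_comp_mk₀]
    congr 1

lemma extClass_surjective : Function.Surjective (extClass P Y q) := by
  intro x
  obtain ⟨f, hf, rfl⟩ := P.extMk_surjective x (q + 1) rfl
  exact ⟨⟨f, hf⟩, rfl⟩

variable {P Y} in
lemma extClass_eq_zero_iff {p : ℕ} (z : projCocycles P Y (p + 1)) :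
    extClass P Y (p + 1) z = 0 ↔ ∃ y : P.complex.X p ⟶ Y, P.complex.d (p + 1) p ≫ y = z :=
  P.extMk_eq_zero_iff z.1 (p + 2) rfl (mem_projCocycles.mp z.2) p rfl

lemma ker_derivedExtClass_le_ker_extClass :
    LinearMap.ker (derivedExtClass P Y q) ≤ LinearMap.ker (extClass P Y q) := by
  intro z hz
  cases q with
  | zero =>
    obtain ⟨y, hy⟩ := (derivedExtClass_eq_zero_iff CochainComplex.prev_nat_zero z).mp hz
    obtain rfl : z = 0 := by
      rw [← Submodule.coe_eq_zero, ← hy, P.complex.shape 0 0 (by simp), Limits.zero_comp]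
    exact zero_mem _
  | succ p =>
    exact (extClass_eq_zero_iff z).mpr
      ((derivedExtClass_eq_zero_iff (CochainComplex.prev_nat_succ p) z).mp hz)

end Classes

variable {Y : ModuleCat.{u} R} {q : ℕ}

lemma derivedExtMap_derivedExtClass (φ : ProjectiveResolution.Hom P Q g)
    (z : projCocycles Q Y q) :
    derivedExtMap g Y q (derivedExtClass Q Y q z) =
      derivedExtClass P Y q ⟨_, comp_mem_projCocycles φ z⟩ := by
  let c := cocycleClass (Q.complex.linearYonedaObj R Y) q z
  have hcomm : (Q.isoExt (R := R) q Y).inv ≫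
      ((_root_.Ext R (ModuleCat.{u} R) q).map g.op).app Y =
      HomologicalComplex.homologyMap (linearYonedaObjMap φ.hom Y) q ≫
        (P.isoExt (R := R) q Y).inv := by
    rw [Iso.inv_comp_eq, ← Category.assoc, Iso.eq_comp_inv, map_isoExt_hom φ]
  have hclass : (HomologicalComplex.homologyMap (linearYonedaObjMap φ.hom Y) q).hom c =
      cocycleClass (P.complex.linearYonedaObj R Y) q ⟨_, comp_mem_projCocycles φ z⟩ :=
    homologyMap_cocycleClass _ rfl
  exact (congr($hcomm c)).trans (congrArg (P.isoExt (R := R) q Y).inv.hom hclass)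

lemma mk₀_comp_extClass (φ : ProjectiveResolution.Hom P Q g) (z : projCocycles Q Y q) :
    (Abelian.Ext.mk₀ g).comp (extClass Q Y q z) (zero_add q) =
      extClass P Y q ⟨_, comp_mem_projCocycles φ z⟩ :=
  ProjectiveResolution.mk₀_comp_extMk z.1 (q + 1) rfl (mem_projCocycles.mp z.2) φ

variable (M Y q) in
/-- The comparison map from the derived functor `Ext` to `Abelian.Ext`. -/
def derivedExtToExt : DerivedExt M Y q →ₗ[R] Abelian.Ext M Y q :=
  descend (derivedExtClass (projectiveResolution M) Y q) (derivedExtClass_surjective _ _ _)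
    (extClass (projectiveResolution M) Y q) (ker_derivedExtClass_le_ker_extClass _ _ _)

lemma derivedExtToExt_derivedExtClass (z : projCocycles (projectiveResolution M) Y q) :
    derivedExtToExt M Y q (derivedExtClass _ Y q z) = extClass _ Y q z :=
  descend_apply _ _ _ _ z

lemma derivedExtToExt_surjective : Function.Surjective (derivedExtToExt M Y q) := by
  intro x
  obtain ⟨z, rfl⟩ := extClass_surjective (projectiveResolution M) Y q x
  exact ⟨_, derivedExtToExt_derivedExtClass z⟩

lemma derivedExtToExt_succ_injective {p : ℕ} :
    Function.Injective (derivedExtToExt M Y (p + 1)) := by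
  rw [injective_iff_map_eq_zero]
  intro x hx
  obtain ⟨z, rfl⟩ := derivedExtClass_surjective (projectiveResolution M) Y (p + 1) x
  rw [derivedExtToExt_derivedExtClass, extClass_eq_zero_iff] at hx
  exact (derivedExtClass_eq_zero_iff (CochainComplex.prev_nat_succ p) z).mpr hx

lemma derivedExtToExt_derivedExtMap (g : M ⟶ M') (x : DerivedExt M' Y q) :
    derivedExtToExt M Y q (derivedExtMap g Y q x) =
      (Abelian.Ext.mk₀ g).comp (derivedExtToExt M' Y q x) (zero_add q) := by
  obtain ⟨z, rfl⟩ := derivedExtClass_surjective (projectiveResolution M') Y q x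
  let φ : ProjectiveResolution.Hom (projectiveResolution M) (projectiveResolution M') g :=
    ⟨ProjectiveResolution.lift g _ _, ProjectiveResolution.lift_commutes_zero g _ _⟩
  rw [derivedExtMap_derivedExtClass φ, derivedExtToExt_derivedExtClass,
    derivedExtToExt_derivedExtClass, mk₀_comp_extClass φ]

lemma extVanishes_of_subsingleton_derivedExt {M N : Type u} [AddCommGroup M] [Module R M]
    [AddCommGroup N] [Module R N]
    [Subsingleton (DerivedExt (ModuleCat.of R M) (ModuleCat.of R N) q)] :
    ExtVanishes R M N q :=
  (derivedExtToExt_surjective (q := q)).subsingleton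

end DerivedExt

section KilledCocycles

variable {R : Type u} [CommRing R] {N : Type u} [AddCommGroup N] [Module R N]
  (J : InjectiveResolution (ModuleCat.of R N)) {c c' : Ideal R} {r : ℕ}

/-- The cocycles of degree `r + 1` of an injective resolution `J` that are killed by the ideal `c`.
These are the cocycles of `Hom(R ⧸ c, J)`. -/
def killedCocycles (c : Ideal R) (r : ℕ) : Submodule R (injTerm J (r + 1)) :=
  Submodule.torsionBySet R (injTerm J (r + 1)) c ⊓ LinearMap.ker (injDiff J (r + 1))

variable {J}

lemma killedCocycles_anti (h : c' ≤ c) : killedCocycles J c r ≤ killedCocycles J c' r :=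
  inf_le_inf_right _ (Submodule.torsionBySet_le_torsionBySet_of_subset h)

/-- The homomorphism `R ⧸ c → J (r + 1)` that corresponds to a cocycle killed by `c`. -/
def killedCocyclesHom (z : killedCocycles J c r) :
    ModuleCat.of R (R ⧸ c) ⟶ J.cocomplex.X (r + 1) :=
  ModuleCat.ofHom (cyclicMap c z.1 (mem_torsionBySet_coe_iff.mp z.2.1))

lemma killedCocyclesHom_mk_one (z : killedCocycles J c r) :
    (killedCocyclesHom z).hom (Submodule.Quotient.mk 1) = z := one_smul R z.1

lemma quotient_hom_ext {X : ModuleCat.{u} R} {f g : ModuleCat.of R (R ⧸ c) ⟶ X}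
    (h : f.hom (Submodule.Quotient.mk 1) = g.hom (Submodule.Quotient.mk 1)) : f = g := by
  ext
  exact h

lemma killedCocyclesHom_comp_d (z : killedCocycles J c r) :
    killedCocyclesHom z ≫ J.cocomplex.d (r + 1) (r + 2) = 0 :=
  quotient_hom_ext ((congrArg (injDiff J (r + 1)) (killedCocyclesHom_mk_one z)).trans z.2.2)

variable (J c r)

/-- The class in `Ext(R ⧸ c, N)` of a cocycle of `J` killed by `c`. -/
def killedCocyclesClass : killedCocycles J c r →ₗ[R]
    Abelian.Ext (ModuleCat.of R (R ⧸ c)) (ModuleCat.of R N) (r + 1) where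
  toFun z := J.extMk (killedCocyclesHom z) (r + 2) rfl (killedCocyclesHom_comp_d z)
  map_add' z w := by
    rw [J.add_extMk]
    congr 1
    refine quotient_hom_ext ((killedCocyclesHom_mk_one _).trans ?_)
    exact (congrArg₂ (· + ·) (killedCocyclesHom_mk_one z) (killedCocyclesHom_mk_one w)).symm
  map_smul' x z := by
    have hsmul (y : Abelian.Ext (ModuleCat.of R (R ⧸ c)) (ModuleCat.of R N) (r + 1)) :
        x • y = (Abelian.Ext.mk₀ (x • 𝟙 _)).comp y (zero_add (r + 1)) := by
      rw [Abelian.Ext.mk₀_smul, Abelian.Ext.smul_comp, Abelian.Ext.mk₀_id_comp]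
    rw [RingHom.id_apply, hsmul, J.mk₀_comp_extMk]
    congr 1
    refine quotient_hom_ext ((killedCocyclesHom_mk_one _).trans ?_)
    rw [Linear.smul_comp, Category.id_comp]
    exact (congrArg (x • ·) (killedCocyclesHom_mk_one z)).symm

lemma killedCocyclesClass_apply (z : killedCocycles J c r) : killedCocyclesClass J c r z =
    J.extMk (killedCocyclesHom z) (r + 2) rfl (killedCocyclesHom_comp_d z) := rfl

lemma killedCocyclesClass_surjective : Function.Surjective (killedCocyclesClass J c r) := by
  intro x
  obtain ⟨f, hf, rfl⟩ := J.extMk_surjective x (r + 2) rfl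
  let z : killedCocycles J c r := ⟨f.hom (Submodule.Quotient.mk 1),
    mem_torsionBySet_coe_iff.mpr fun _ hx => smul_map_quotient_mk_one f.hom hx,
    congr($hf (Submodule.Quotient.mk 1))⟩
  refine ⟨z, ?_⟩
  rw [killedCocyclesClass_apply]
  congr 1
  exact quotient_hom_ext (killedCocyclesHom_mk_one z)

variable {J c r}

lemma killedCocyclesClass_eq_zero_iff (z : killedCocycles J c r) :
    killedCocyclesClass J c r z = 0 ↔
      (z : injTerm J (r + 1)) ∈
        (Submodule.torsionBySet R (injTerm J r) c).map (injDiff J r) := by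
  rw [killedCocyclesClass_apply, J.extMk_eq_zero_iff _ _ _ _ r rfl]
  constructor
  · rintro ⟨g, hg⟩
    refine ⟨g.hom (Submodule.Quotient.mk 1),
      mem_torsionBySet_coe_iff.mpr fun _ hx => smul_map_quotient_mk_one g.hom hx, ?_⟩
    rw [← killedCocyclesHom_mk_one z, ← hg]
    rfl
  · rintro ⟨y, hy, hyz⟩
    refine ⟨ModuleCat.ofHom (cyclicMap c y (mem_torsionBySet_coe_iff.mp hy)), ?_⟩
    refine quotient_hom_ext (Eq.trans ?_ (killedCocyclesHom_mk_one z).symm)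
    rw [← hyz]
    exact congrArg (injDiff J r) (one_smul R y)

/-- The projection `R ⧸ c' → R ⧸ c` for `c' ≤ c`. -/
def quotientProj (h : c' ≤ c) : ModuleCat.of R (R ⧸ c') ⟶ ModuleCat.of R (R ⧸ c) :=
  ModuleCat.ofHom (Submodule.mapQ c' c LinearMap.id h)

lemma mk₀_quotientProj_comp_killedCocyclesClass (h : c' ≤ c) (z : killedCocycles J c r) :
    (Abelian.Ext.mk₀ (quotientProj h)).comp (killedCocyclesClass J c r z) (zero_add _) =
      killedCocyclesClass J c' r ⟨z, killedCocycles_anti h z.2⟩ := by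
  rw [killedCocyclesClass_apply, J.mk₀_comp_extMk, killedCocyclesClass_apply]
  congr 1
  exact quotient_hom_ext rfl

end KilledCocycles

section TorsionCohomology

variable {R : Type u} [CommRing R] {N : Type u} [AddCommGroup N] [Module R N]
  (J : InjectiveResolution (ModuleCat.of R N)) (I : Ideal R) (r : ℕ)

/-- The cohomology of degree `r + 1` of the complex `Γ_I(J)`. -/
abbrev torsionCohomology : Type u :=
  subcomplexCohomology (injDiff J) (fun q => powTorsion I (injTerm J q)) r

variable {I} in
lemma torsionBySet_pow_le_powTorsion {X : Type*} [AddCommGroup X] [Module R X] (t : ℕ) :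
    Submodule.torsionBySet R X (I ^ t : Ideal R) ≤ powTorsion I X :=
  fun _ hz => ⟨t, mem_torsionBySet_coe_iff.mp hz⟩

/-- The class in the cohomology of `Γ_I(J)` of a cocycle killed by `I ^ t`. -/
def torsionClass (t : ℕ) : killedCocycles J (I ^ t) r →ₗ[R] torsionCohomology J I r :=
  Submodule.mkQ _ ∘ₗ
    Submodule.inclusion (inf_le_inf_right _ (torsionBySet_pow_le_powTorsion t))

variable {J I r} in
lemma torsionClass_eq_zero_iff {t : ℕ} (z : killedCocycles J (I ^ t) r) :
    torsionClass J I r t z = 0 ↔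
      (z : injTerm J (r + 1)) ∈ (powTorsion I (injTerm J r)).map (injDiff J r) :=
  mkQ_subcomplexCocycles_eq_zero_iff

/-- The map from `Ext(R ⧸ I ^ t, N)` to the cohomology of `Γ_I(J)`. -/
def extToTorsionCohomology (t : ℕ) :
    Abelian.Ext (ModuleCat.of R (R ⧸ I ^ t)) (ModuleCat.of R N) (r + 1) →ₗ[R]
      torsionCohomology J I r :=
  descend (killedCocyclesClass J (I ^ t) r) (killedCocyclesClass_surjective J (I ^ t) r)
    (torsionClass J I r t) fun z hz => (torsionClass_eq_zero_iff z).mpr <|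
      Submodule.map_mono (torsionBySet_pow_le_powTorsion t)
        ((killedCocyclesClass_eq_zero_iff z).mp hz)

variable {J I r}

lemma extToTorsionCohomology_killedCocyclesClass {t : ℕ} (z : killedCocycles J (I ^ t) r) :
    extToTorsionCohomology J I r t (killedCocyclesClass J (I ^ t) r z) = torsionClass J I r t z :=
  descend_apply _ _ _ _ z

lemma extToTorsionCohomology_mk₀_comp {s t : ℕ} (h : s ≤ t)
    (x : Abelian.Ext (ModuleCat.of R (R ⧸ I ^ s)) (ModuleCat.of R N) (r + 1)) :
    extToTorsionCohomology J I r t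
        ((Abelian.Ext.mk₀ (quotientProj (Ideal.pow_le_pow_right h))).comp x (zero_add _)) =
      extToTorsionCohomology J I r s x := by
  obtain ⟨z, rfl⟩ := killedCocyclesClass_surjective J (I ^ s) r x
  rw [mk₀_quotientProj_comp_killedCocyclesClass, extToTorsionCohomology_killedCocyclesClass,
    extToTorsionCohomology_killedCocyclesClass]
  rfl

lemma exists_extToTorsionCohomology_eq (x : torsionCohomology J I r) :
    ∃ t y, extToTorsionCohomology J I r t y = x := by
  obtain ⟨⟨z, ⟨t, ht⟩, hz⟩, rfl⟩ := Submodule.Quotient.mk_surjective _ x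
  exact ⟨t, _, extToTorsionCohomology_killedCocyclesClass
    ⟨z, mem_torsionBySet_coe_iff.mpr ht, hz⟩⟩

lemma exists_mk₀_comp_eq_zero {s : ℕ}
    {x : Abelian.Ext (ModuleCat.of R (R ⧸ I ^ s)) (ModuleCat.of R N) (r + 1)}
    (hx : extToTorsionCohomology J I r s x = 0) :
    ∃ (t : ℕ) (h : s ≤ t),
      (Abelian.Ext.mk₀ (quotientProj (Ideal.pow_le_pow_right (I := I) h))).comp x
        (zero_add _) = 0 := by
  obtain ⟨z, rfl⟩ := killedCocyclesClass_surjective J (I ^ s) r x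
  rw [extToTorsionCohomology_killedCocyclesClass, torsionClass_eq_zero_iff] at hx
  obtain ⟨y, ⟨t, ht⟩, hyz⟩ := hx
  refine ⟨s + t, by omega, ?_⟩
  rw [mk₀_quotientProj_comp_killedCocyclesClass, killedCocyclesClass_eq_zero_iff]
  exact ⟨y, mem_torsionBySet_coe_iff.mpr fun x hx =>
    ht x (Ideal.pow_le_pow_right (by omega) hx), hyz⟩

end TorsionCohomology

section LocalCohomology

open Opposite Limits

variable {R : Type u} [CommRing R] {N : Type u} [AddCommGroup N] [Module R N]
  (J : InjectiveResolution (ModuleCat.of R N)) (I : Ideal R) (r : ℕ)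

/-- The map from the derived functor `Ext(R ⧸ I ^ t, N)` to the cohomology of `Γ_I(J)`. -/
def derivedExtToTorsionCohomology (t : ℕ) :
    DerivedExt (ModuleCat.of R (R ⧸ I ^ t)) (ModuleCat.of R N) (r + 1) →ₗ[R]
      torsionCohomology J I r :=
  extToTorsionCohomology J I r t ∘ₗ derivedExtToExt _ _ (r + 1)

variable {J I r} in
lemma derivedExtToTorsionCohomology_derivedExtMap {s t : ℕ} (h : s ≤ t)
    (x : DerivedExt (ModuleCat.of R (R ⧸ I ^ s)) (ModuleCat.of R N) (r + 1)) :
    derivedExtToTorsionCohomology J I r t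
        (derivedExtMap (quotientProj (Ideal.pow_le_pow_right h)) _ _ x) =
      derivedExtToTorsionCohomology J I r s x := by
  rw [derivedExtToTorsionCohomology, LinearMap.comp_apply, derivedExtToExt_derivedExtMap,
    extToTorsionCohomology_mk₀_comp h]
  rfl

variable {J I r} in
lemma exists_derivedExtMap_eq_zero {s : ℕ}
    {x : DerivedExt (ModuleCat.of R (R ⧸ I ^ s)) (ModuleCat.of R N) (r + 1)}
    (hx : derivedExtToTorsionCohomology J I r s x = 0) :
    ∃ (t : ℕ) (h : s ≤ t),
      derivedExtMap (quotientProj (Ideal.pow_le_pow_right (I := I) h)) _ _ x = 0 := by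
  obtain ⟨t, h, ht⟩ := exists_mk₀_comp_eq_zero hx
  rw [← derivedExtToExt_derivedExtMap, map_eq_zero_iff _ derivedExtToExt_succ_injective] at ht
  exact ⟨t, h, ht⟩

variable (N)

/-- The diagram of the modules `Ext(R ⧸ I ^ t, N)`, whose colimit is `H^q_I(N)`. -/
abbrev localCohomologyDiagram (q : ℕ) : (ℕᵒᵖ)ᵒᵖ ⥤ ModuleCat.{u} R :=
  localCohomology.diagram (localCohomology.idealPowersDiagram I) q ⋙
    (evaluation (ModuleCat.{u} R) (ModuleCat.{u} R)).obj (ModuleCat.of R N)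

/-- The cocone of point `H^q_I(N)` over the diagram of the modules `Ext(R ⧸ I ^ t, N)`. -/
def localCohomologyCocone (q : ℕ) : Cocone (localCohomologyDiagram N I q) :=
  have := localCohomology.hasColimitDiagram.{u, 0} (localCohomology.idealPowersDiagram I) q
  ((evaluation (ModuleCat.{u} R) (ModuleCat.{u} R)).obj (ModuleCat.of R N)).mapCocone
    (colimit.cocone (localCohomology.diagram (localCohomology.idealPowersDiagram I) q))

/-- Local cohomology is the colimit of the modules `Ext(R ⧸ I ^ t, N)`. -/
def isColimitLocalCohomologyCocone (q : ℕ) : IsColimit (localCohomologyCocone N I q) :=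
  have := localCohomology.hasColimitDiagram.{u, 0} (localCohomology.idealPowersDiagram I) q
  isColimitOfPreserves _ (colimit.isColimit _)

variable {N}

/-- The cocone given by the maps from `Ext(R ⧸ I ^ t, N)` to the cohomology of `Γ_I(J)`. -/
def torsionCohomologyCocone : Cocone (localCohomologyDiagram N I (r + 1)) where
  pt := ModuleCat.of R (torsionCohomology J I r)
  ι :=
    { app := fun j => ModuleCat.ofHom (derivedExtToTorsionCohomology J I r j.unop.unop)
      naturality := fun j j' f => by
        ext x
        exact derivedExtToTorsionCohomology_derivedExtMap (leOfHom f.unop.unop) x }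

/-- The comparison map from `H^{r+1}_I(N)` to the cohomology of `Γ_I(J)`. -/
def localCohomologyToTorsionCohomology :
    (localCohomology I (r + 1)).obj (ModuleCat.of R N) →ₗ[R] torsionCohomology J I r :=
  ((isColimitLocalCohomologyCocone N I (r + 1)).desc (torsionCohomologyCocone J I r)).hom

lemma localCohomologyToTorsionCohomology_ι (t : ℕ)
    (x : (localCohomologyDiagram N I (r + 1)).obj (op (op t))) :
    localCohomologyToTorsionCohomology J I r
        (((localCohomologyCocone N I (r + 1)).ι.app (op (op t))).hom x) =
      derivedExtToTorsionCohomology J I r t x :=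
  congr($((isColimitLocalCohomologyCocone N I (r + 1)).fac
    (torsionCohomologyCocone J I r) (op (op t))) x)

lemma localCohomologyToTorsionCohomology_surjective :
    Function.Surjective (localCohomologyToTorsionCohomology J I r) := by
  intro x
  obtain ⟨t, y, rfl⟩ := exists_extToTorsionCohomology_eq x
  obtain ⟨y, rfl⟩ := derivedExtToExt_surjective y
  exact ⟨_, localCohomologyToTorsionCohomology_ι J I r t y⟩

lemma localCohomologyToTorsionCohomology_injective :
    Function.Injective (localCohomologyToTorsionCohomology J I r) := by
  rw [injective_iff_map_eq_zero]
  intro x hx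
  have : PreservesFilteredColimitsOfSize.{0, 0} (forget (ModuleCat.{u} R)) :=
    preservesFilteredColimitsOfSize_shrink _
  obtain ⟨⟨⟨s⟩⟩, y, rfl⟩ :=
    Concrete.isColimit_exists_rep _ (isColimitLocalCohomologyCocone N I (r + 1)) x
  obtain ⟨t, h, ht⟩ := exists_derivedExtMap_eq_zero
    ((localCohomologyToTorsionCohomology_ι J I r s y).symm.trans hx)
  have hw := (localCohomologyCocone N I (r + 1)).w (homOfLE h).op.op
  exact (congr($hw y)).symm.trans
    ((congrArg ((localCohomologyCocone N I (r + 1)).ι.app (op (op t))).hom ht).trans (map_zero _))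

/-- Local cohomology is the cohomology of the complex `Γ_I(J)`. -/
def localCohomologyEquiv :
    (localCohomology I (r + 1)).obj (ModuleCat.of R N) ≃ₗ[R] torsionCohomology J I r :=
  LinearEquiv.ofBijective (localCohomologyToTorsionCohomology J I r)
    ⟨localCohomologyToTorsionCohomology_injective J I r,
      localCohomologyToTorsionCohomology_surjective J I r⟩

end LocalCohomology

lemma subsingleton_of_krullDim_submodule_eq_zero {R M : Type*} [Ring R] [AddCommGroup M]
    [Module R M] (h : Order.krullDim (Submodule R M) = 0) : Subsingleton M := by
  by_contra hM
  have : Nontrivial M := not_subsingleton_iff_nontrivial.mp hM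
  exact (Order.krullDim_pos_iff.mpr ⟨(⊥ : Submodule R M), ⊤, bot_lt_top⟩).ne' h

lemma extVanishes_of_lyubeznikNumber_eq_zero {R : Type u} [CommRing R] [IsLocalRing R]
    (J : InjectiveResolution (ModuleCat.of R R)) {I : Ideal R} {n j r : ℕ} (hjr : j + r + 2 = n)
    (h : lyubeznikNumber R I n j (j + 1) = 0) :
    ExtVanishes R (ResidueField R) (torsionCohomology J I r) j := by
  have hsub : Subsingleton (lyubeznikModule R I n j (j + 1)) :=
    subsingleton_of_krullDim_submodule_eq_zero h
  rw [lyubeznikModule, show n - (j + 1) = r + 1 by omega] at hsub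
  exact extVanishes_of_subsingleton_derivedExt.of_equiv_right (localCohomologyEquiv J I r)

lemma isRegularLocalRing_of_isRegularLocal {R : Type*} [CommRing R] [IsLocalRing R]
    [IsNoetherianRing R] (hR : IsRegularLocal R) : IsRegularLocalRing R := by
  obtain ⟨s, hs, hdim⟩ := hR
  refine .of_spanFinrank_maximalIdeal_le R ?_
  rw [hdim, ← hs, Nat.cast_le, ← Set.ncard_coe_finset]
  exact Submodule.spanFinrank_span_le_ncard_of_finite s.finite_toSet

section Disconnected

variable {A : Type*} [CommRing A]

lemma exists_zeroLocus_cover_of_not_isPreconnected {J : Ideal A}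
    (h : ¬ IsPreconnected (zeroLocus (J : Set A))ᶜ) :
    ∃ a b : Ideal A, (∀ q : PrimeSpectrum A, ¬ J ≤ q.asIdeal → a ≤ q.asIdeal ∨ b ≤ q.asIdeal) ∧
      (∃ q : PrimeSpectrum A, ¬ J ≤ q.asIdeal ∧ a ≤ q.asIdeal) ∧
      (∃ q : PrimeSpectrum A, ¬ J ≤ q.asIdeal ∧ b ≤ q.asIdeal) ∧
      ∀ q : PrimeSpectrum A, a ⊔ b ≤ q.asIdeal → J ≤ q.asIdeal := by
  rw [isPreconnected_closed_iff] at h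
  push Not at h
  obtain ⟨s, t, hs, ht, hcover, hsne, htne, hdisj⟩ := h
  obtain ⟨a, rfl⟩ := (isClosed_iff_zeroLocus_ideal s).mp hs
  obtain ⟨b, rfl⟩ := (isClosed_iff_zeroLocus_ideal t).mp ht
  refine ⟨a, b, fun q hq => hcover hq, hsne, htne, fun q hq => ?_⟩
  by_contra hJ
  exact hdisj.subset ⟨hJ, le_sup_left.trans hq, le_sup_right.trans hq⟩

lemma exists_mem_minimalPrimes_le (q : PrimeSpectrum A) : ∃ p ∈ minimalPrimes A, p ≤ q.asIdeal :=
  Ideal.exists_minimalPrimes_le bot_le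

lemma inf_le_nilradical {a b : Ideal A} (h : ∀ p ∈ minimalPrimes A, a ≤ p ∨ b ≤ p) :
    a ⊓ b ≤ nilradical A := by
  rw [nilradical_eq_sInf]
  refine le_sInf fun q hq => ?_
  obtain ⟨p, hp, hpq⟩ := exists_mem_minimalPrimes_le ⟨q, hq⟩
  exact ((h p hp).elim inf_le_of_left_le inf_le_of_right_le).trans hpq

lemma ringKrullDim_quotient_le_of_forall_le {a J : Ideal A}
    (h : ∀ q : PrimeSpectrum A, a ≤ q.asIdeal → J ≤ q.asIdeal) :
    ringKrullDim (A ⧸ a) ≤ ringKrullDim (A ⧸ J) := by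
  have hJ : J ≤ a.radical := by
    rw [Ideal.radical_eq_sInf]
    exact le_sInf fun q hq => h ⟨q, hq.2⟩ hq.1
  calc ringKrullDim (A ⧸ a) = ringKrullDim (A ⧸ a.radical) := by
        rw [ringKrullDim_quotient, ringKrullDim_quotient, zeroLocus_radical]
    _ ≤ ringKrullDim (A ⧸ J) := ringKrullDim_quotient_le_of_le hJ

lemma ringKrullDim_le_ringKrullDim_quotient
    (hA : ∀ p ∈ minimalPrimes A, ringKrullDim (A ⧸ p) = ringKrullDim A) {a b J : Ideal A}
    (hcover : ∀ p ∈ minimalPrimes A, a ≤ p ∨ b ≤ p)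
    (hdisj : ∀ q : PrimeSpectrum A, a ⊔ b ≤ q.asIdeal → J ≤ q.asIdeal)
    {q : PrimeSpectrum A} (hJq : ¬ J ≤ q.asIdeal) (haq : a ≤ q.asIdeal) :
    ringKrullDim A ≤ ringKrullDim (A ⧸ a) := by
  obtain ⟨p, hp, hpq⟩ := exists_mem_minimalPrimes_le q
  rcases hcover p hp with hap | hbp
  · exact (hA p hp).ge.trans (ringKrullDim_quotient_le_of_le hap)
  · exact absurd (hdisj q (sup_le haq (hbp.trans hpq))) hJq

lemma exists_inf_le_nilradical_of_not_isConnected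
    (hA : ∀ p ∈ minimalPrimes A, ringKrullDim (A ⧸ p) = ringKrullDim A) {J : Ideal A}
    (hJ : ringKrullDim (A ⧸ J) < ringKrullDim A) (h : ¬ IsConnected (zeroLocus (J : Set A))ᶜ) :
    ∃ a b : Ideal A, a ⊓ b ≤ nilradical A ∧ ringKrullDim A ≤ ringKrullDim (A ⧸ a) ∧
      ringKrullDim A ≤ ringKrullDim (A ⧸ b) ∧
      ringKrullDim (A ⧸ (a ⊔ b)) ≤ ringKrullDim (A ⧸ J) := by
  have hmin {p : Ideal A} (hp : p ∈ minimalPrimes A) : ¬ J ≤ p := fun hJp =>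
    (hJ.trans_le ((hA p hp).ge.trans (ringKrullDim_quotient_le_of_le hJp))).false
  have : Nontrivial A := not_subsingleton_iff_nontrivial.mp fun _ =>
    hJ.ne_bot ringKrullDim_eq_bot_of_subsingleton
  obtain ⟨p, hp, -⟩ := exists_mem_minimalPrimes_le (Classical.arbitrary (PrimeSpectrum A))
  have hne : (zeroLocus (J : Set A))ᶜ.Nonempty := ⟨⟨p, hp.1.1⟩, hmin hp⟩
  obtain ⟨a, b, hcover, ⟨qa, hJa, ha⟩, ⟨qb, hJb, hb⟩, hdisj⟩ :=
    exists_zeroLocus_cover_of_not_isPreconnected fun hpre => h ⟨hne, hpre⟩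
  have hcover' (p : Ideal A) (hp : p ∈ minimalPrimes A) : a ≤ p ∨ b ≤ p :=
    hcover ⟨p, hp.1.1⟩ (hmin hp)
  refine ⟨a, b, inf_le_nilradical hcover',
    ringKrullDim_le_ringKrullDim_quotient hA hcover' hdisj hJa ha,
    ringKrullDim_le_ringKrullDim_quotient hA (fun p hp => (hcover' p hp).symm) ?_ hJb hb,
    ringKrullDim_quotient_le_of_forall_le hdisj⟩
  rwa [sup_comm]

end Disconnected

section Presentation

variable {R A : Type*} [CommRing R] [CommRing A] (π : R →+* A)

lemma exists_pow_comap_inf_comap_le_ker [IsNoetherianRing R] {a b : Ideal A}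
    (hab : a ⊓ b ≤ nilradical A) : ∃ k, (a.comap π ⊓ b.comap π) ^ k ≤ RingHom.ker π := by
  refine Ideal.exists_pow_le_of_le_radical_of_fg ?_ (IsNoetherian.noetherian _)
  rw [← Ideal.comap_inf, RingHom.ker, ← Ideal.comap_radical]
  exact Ideal.comap_mono hab

variable {π} (hπ : Function.Surjective π)
include hπ

lemma ringKrullDim_quotient_comap (a : Ideal A) :
    ringKrullDim (R ⧸ a.comap π) = ringKrullDim (A ⧸ a) :=
  ringKrullDim_eq_of_ringEquiv (RingEquiv.ofBijective (Ideal.quotientMap a π le_rfl)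
    ⟨Ideal.quotientMap_injective, Ideal.quotientMap_surjective hπ⟩)

lemma comap_sup_of_surjective (a b : Ideal A) : (a ⊔ b).comap π = a.comap π ⊔ b.comap π := by
  have hker : RingHom.ker π ≤ a.comap π ⊔ b.comap π :=
    (Ideal.comap_mono bot_le).trans le_sup_left
  rw [← sup_eq_left.mpr hker, ← Ideal.comap_map_of_surjective' π hπ, Ideal.map_sup,
    Ideal.map_comap_of_surjective π hπ, Ideal.map_comap_of_surjective π hπ]

end Presentation

theorem lt_ringKrullDim_quotient_sup_of_lyubeznikNumber_eq_zero {R A : Type u} [CommRing R]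
    [IsLocalRing R] [IsNoetherianRing R] [CommRing A] (hR : IsRegularLocal R) {n : ℕ}
    (hn : ringKrullDim R = n) {π : R →+* A} (hπ : Function.Surjective π) {i : ℕ}
    (hvan : ∀ j ≤ i, lyubeznikNumber R (RingHom.ker π) n j (j + 1) = 0) {a b : Ideal A}
    (hab : a ⊓ b ≤ nilradical A) (ha : (i + 2 : ℕ) ≤ ringKrullDim (A ⧸ a))
    (hb : (i + 2 : ℕ) ≤ ringKrullDim (A ⧸ b)) : i < ringKrullDim (A ⧸ (a ⊔ b)) := by
  obtain ⟨k, hk⟩ := exists_pow_comap_inf_comap_le_ker π hab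
  rw [← ringKrullDim_quotient_comap hπ] at ha hb ⊢
  rw [comap_sup_of_surjective hπ]
  exact lt_ringKrullDim_quotient_sup (isRegularLocalRing_of_isRegularLocal hR) hn
    (injectiveResolution (ModuleCat.of R R)) (Ideal.comap_mono bot_le) (Ideal.comap_mono bot_le)
    hk ha hb fun j r hj hjr => extVanishes_of_lyubeznikNumber_eq_zero _ hjr (hvan j hj)

end LyubeznikConnectedness

open LyubeznikConnectedness in
theorem connDim_ge_of_lyubeznik_vanishing_general
    (A : Type u) [CommRing A]
    (hAequi : ∀ p ∈ minimalPrimes A, ringKrullDim (A ⧸ p) = ringKrullDim A)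
    (R : Type u) [CommRing R] [IsLocalRing R] [IsNoetherianRing R] (hreg : IsRegularLocal R)
    (n : ℕ) (hn : ringKrullDim R = (n : ℕ))
    (I : Ideal R) (e : A ≃+* R ⧸ I)
    (i : ℕ) (hi : ((i + 2 : ℕ) : WithBot ℕ∞) ≤ ringKrullDim A)
    (hvan : ∀ j ≤ i, lyubeznikNumber R I n j (j + 1) = 0) :
    ((i + 1 : ℕ) : WithBot ℕ∞) ≤ connDim A := by
  refine le_sInf ?_
  rintro _ ⟨J, rfl, hJ⟩
  by_contra! hlt
  obtain ⟨a, b, hab, ha, hb, hsup⟩ := exists_inf_le_nilradical_of_not_isConnected hAequi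
    (hlt.trans_le (le_trans (by exact_mod_cast (i + 1).le_succ) hi)) hJ
  let π : R →+* A := (e.symm : R ⧸ I →+* A).comp (Ideal.Quotient.mk I)
  have hπ : Function.Surjective π := e.symm.surjective.comp Ideal.Quotient.mk_surjective
  have hker : RingHom.ker π = I := by
    rw [RingHom.ker_comp_of_injective _ e.symm.injective, Ideal.mk_ker]
  have hgt : i < ringKrullDim (A ⧸ (a ⊔ b)) :=
    lt_ringKrullDim_quotient_sup_of_lyubeznikNumber_eq_zero hreg hn hπ (hker ▸ hvan) hab
      (hi.trans ha) (hi.trans hb)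
  rw [Nat.cast_add, Nat.cast_one, ENat.WithBot.lt_add_one_iff] at hlt
  exact (hgt.trans_le (hsup.trans hlt)).false

/-- Let `A` be an equidimensional complete local ring containing a field, of
dimension `d ≥ 2`, with separably closed residue field, presented as `A ≅ R/I`
with `(R, m)` an `n`-dimensional complete regular local ring containing a field.
If the Lyubeznik numbers `λ_{j,j+1}(A)` vanish for all `0 ≤ j ≤ i`, where
`i ≤ d - 2`, then the connectedness dimension of `A` is at least `i + 1`. -/
theorem connDim_ge_of_lyubeznik_vanishing
    (A : Type u) [CommRing A] [IsLocalRing A] [IsNoetherianRing A]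
    [IsAdicComplete (IsLocalRing.maximalIdeal A) A]
    (hAfield : ContainsField A) [IsSepClosed (ResidueField A)]
    (hAequi : ∀ p ∈ minimalPrimes A, ringKrullDim (A ⧸ p) = ringKrullDim A)
    (R : Type u) [CommRing R] [IsLocalRing R] [IsNoetherianRing R]
    [IsAdicComplete (IsLocalRing.maximalIdeal R) R]
    (hRfield : ContainsField R) (hreg : IsRegularLocal R)
    (n : ℕ) (hn : ringKrullDim R = (n : ℕ))
    (I : Ideal R) (e : A ≃+* R ⧸ I)
    (d : ℕ) (hd : 2 ≤ d) (hdimA : ringKrullDim A = (d : ℕ))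
    (i : ℕ) (hi : i ≤ d - 2)
    (hvan : ∀ j ≤ i, lyubeznikNumber R I n j (j + 1) = 0) :
    ((i + 1 : ℕ) : WithBot ℕ∞) ≤ connDim A := by
  have hi' : ((i + 2 : ℕ) : WithBot ℕ∞) ≤ ringKrullDim A := hdimA ▸ by exact_mod_cast (by omega)
  exact connDim_ge_of_lyubeznik_vanishing_general A hAequi R hreg n hn I e i hi' hvan
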